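/- Network coding solvability is undecidable: there is no algorithm that, given a network, decides whether it is solvable. -/

import Mathlib

open scoped Classical

noncomputable section

/-- The probability of the event `S` under the probability mass function `p`. -/
def Pr {Ω : Type} (p : Ω → ℝ) (S : Set Ω) : ℝ := ∑' ω : S, p ω

/-- `p` is a probability mass function on the sample space `Ω`. -/
def IsProb {Ω : Type} (p : Ω → ℝ) : Prop := (∀ ω, 0 ≤ p ω) ∧ Pr p Set.univ = 1

/-- The support of a random variable `X`: the set of values attained with positive
probability. -/
def supp {Ω α : Type} (p : Ω → ℝ) (X : Ω → α) : Set α := {a | 0 < Pr p {ω | X ω = a}}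

/-- `X` is almost surely a function of `Y` (written `X ≤ι Y` in the paper). -/
def FuncOf {Ω α β : Type} (p : Ω → ℝ) (X : Ω → α) (Y : Ω → β) : Prop :=
  ∃ f : β → α, Pr p {ω | X ω = f (Y ω)} = 1

/-- The random variables `X` and `Y` are independent. -/
def IndepRV {Ω α β : Type} (p : Ω → ℝ) (X : Ω → α) (Y : Ω → β) : Prop :=
  ∀ (a : α) (b : β), Pr p {ω | X ω = a ∧ Y ω = b} = Pr p {ω | X ω = a} * Pr p {ω | Y ω = b}

/-- The random variables `X`, `Y`, `Z` are mutually independent: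
`X ⟂ Y` and `(X, Y) ⟂ Z`. -/
def Indep3 {Ω α β γ : Type} (p : Ω → ℝ) (X : Ω → α) (Y : Ω → β) (Z : Ω → γ) : Prop :=
  IndepRV p X Y ∧ IndepRV p (fun ω => (X ω, Y ω)) Z

/-- The predicate `tri(X, Y, Z)`: each variable is a.s. a function of the other two, and the
three variables are pairwise independent. -/
def tri {Ω α β γ : Type} (p : Ω → ℝ) (X : Ω → α) (Y : Ω → β) (Z : Ω → γ) : Prop :=
  FuncOf p X (fun ω => (Y ω, Z ω)) ∧ FuncOf p Y (fun ω => (X ω, Z ω)) ∧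
    FuncOf p Z (fun ω => (X ω, Y ω)) ∧
    IndepRV p X Y ∧ IndepRV p X Z ∧ IndepRV p Y Z


/-- A network coding instance: `(n, s, edges, acc, dem)` where `n` is the number of nodes
(nodes are `0, …, n−1`), `s` is the number of source messages (messages are `0, …, s−1`),
`edges` is the list of directed edges of the multigraph (edges are indexed by their
position in the list), `acc` lists, for each node `v`, the set `C_v` of message indices
the node has access to, and `dem` lists, for each node `v`, the set `D_v` of message
indices the node demands. -/
abbrev Network : Type := ℕ × ℕ × List (ℕ × ℕ) × List (List ℕ) × List (List ℕ)

/-- The indices of the edges coming into node `v`. -/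
def inEdges (edges : List (ℕ × ℕ)) (v : ℕ) : List ℕ :=
  (List.range edges.length).filter fun e => (edges.getD e (0, 0)).2 = v

/-- The indices of the edges going out of node `v`. -/
def outEdges (edges : List (ℕ × ℕ)) (v : ℕ) : List ℕ :=
  (List.range edges.length).filter fun e => (edges.getD e (0, 0)).1 = v

/-- The network is valid: the edges join existing nodes, the directed multigraph is
acyclic (it admits a topological ranking), and the access/demand lists assign a set of
existing message indices to each node. -/
def NetworkValid : Network → Prop := fun net =>
  match net with
  | (n, s, edges, acc, dem) =>
    (∀ e ∈ edges, e.1 < n ∧ e.2 < n) ∧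
    (∃ rank : ℕ → ℕ, ∀ e ∈ edges, rank e.1 < rank e.2) ∧
    acc.length = n ∧ dem.length = n ∧
    (∀ l ∈ acc, ∀ i ∈ l, i < s) ∧ (∀ l ∈ dem, ∀ i ∈ l, i < s)

/-- The network is solvable with alphabet size `q`: there are a probability space, source
messages `M_0, …, M_{s−1}` that are i.i.d. uniform with cardinality `q`, and signals
`X_e` of cardinality at most `q` along the edges, such that at every node `v` the pair
`(M_{D_v}, X_{out(v)})` is almost surely a function of `(M_{C_v}, X_{in(v)})`. -/
def SolvableWith : Network → ℕ → Prop := fun net q =>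
  match net with
  | (n, s, edges, acc, dem) =>
    ∃ (Ω : Type) (p : Ω → ℝ), IsProb p ∧
      ∃ (M : ℕ → Ω → Fin q) (X : ℕ → Ω → Fin q),
        (∀ m : ℕ → Fin q,
          Pr p {ω | ∀ i < s, M i ω = m i} = ((q : ℝ))⁻¹ ^ s) ∧
        ∀ v < n, FuncOf p
          (fun ω => (((dem.getD v []).map fun i => M i ω),
                     (outEdges edges v).map fun e => X e ω))
          (fun ω => (((acc.getD v []).map fun i => M i ω),
                     (inEdges edges v).map fun e => X e ω))

/-- The network is solvable: it is solvable with some alphabet size `q ≥ 2`. -/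
def Solvable (net : Network) : Prop := ∃ q, 2 ≤ q ∧ SolvableWith net q


/-! ### While programs -/

namespace NC

/-- While programs over natural-number registers. -/
inductive Prog : Type
  | skip : Prog
  | inc : ℕ → Prog
  | seq : Prog → Prog → Prog
  | loop : ℕ → Prog → Prog

open Function

/-- Timed big-step semantics. -/
inductive Run : Prog → (ℕ → ℕ) → ℕ → (ℕ → ℕ) → Prop
  | skip (σ) : Run Prog.skip σ 1 σ
  | inc (i σ) : Run (Prog.inc i) σ 1 (update σ i (σ i + 1))
  | seq {p q σ t τ t' υ} : Run p σ t τ → Run q τ t' υ → Run (Prog.seq p q) σ (1 + t + t') υ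
  | loop0 {i p σ} : σ i = 0 → Run (Prog.loop i p) σ 1 σ
  | loopS {i p σ n t τ t' υ} : σ i = n + 1 → Run p (update σ i n) t τ →
      Run (Prog.loop i p) τ t' υ → Run (Prog.loop i p) σ (1 + t + t') υ

theorem Run.det {p σ t τ} (h : Run p σ t τ) : ∀ {t' τ'}, Run p σ t' τ' → t = t' ∧ τ = τ' := by
  induction h with
  | skip σ => intro t' τ' h; cases h; simp
  | inc i σ => intro t' τ' h; cases h; simp
  | seq h1 h2 ih1 ih2 =>
    intro t' τ' h
    cases h with
    | seq a b =>
      obtain ⟨rfl, rfl⟩ := ih1 a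
      obtain ⟨rfl, rfl⟩ := ih2 b
      simp
  | loop0 h0 =>
    intro t' τ' h
    cases h with
    | loop0 _ => simp
    | loopS a _ _ => omega
  | loopS h0 h1 h2 ih1 ih2 =>
    intro t' τ' h
    cases h with
    | loop0 _ => omega
    | loopS a b c =>
      rw [h0] at a
      obtain rfl := Nat.succ.inj a
      obtain ⟨rfl, rfl⟩ := ih1 b
      obtain ⟨rfl, rfl⟩ := ih2 c
      simp

/-- All registers of the program are below `m`. -/
def Prog.Bdd (m : ℕ) : Prog → Prop
  | .skip => True
  | .inc i => i < m
  | .seq p q => p.Bdd m ∧ q.Bdd m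
  | .loop i p => i < m ∧ p.Bdd m

theorem Prog.Bdd.mono {m m' : ℕ} (h : m ≤ m') : ∀ {p : Prog}, p.Bdd m → p.Bdd m'
  | .skip, _ => trivial
  | .inc _, hp => lt_of_lt_of_le hp h
  | .seq _ _, hp => ⟨Prog.Bdd.mono h hp.1, Prog.Bdd.mono h hp.2⟩
  | .loop _ _, hp => ⟨lt_of_lt_of_le hp.1 h, Prog.Bdd.mono h hp.2⟩

theorem Prog.exists_bdd : ∀ p : Prog, ∃ m, p.Bdd m
  | .skip => ⟨0, trivial⟩
  | .inc i => ⟨i + 1, Nat.lt_succ_self i⟩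
  | .seq p q => by
    obtain ⟨a, ha⟩ := Prog.exists_bdd p
    obtain ⟨b, hb⟩ := Prog.exists_bdd q
    exact ⟨max a b, ha.mono (le_max_left _ _), hb.mono (le_max_right _ _)⟩
  | .loop i p => by
    obtain ⟨a, ha⟩ := Prog.exists_bdd p
    exact ⟨max a (i + 1), lt_of_lt_of_le (Nat.lt_succ_self i) (le_max_right _ _),
      ha.mono (le_max_left _ _)⟩

def Ex (p : Prog) (σ τ : ℕ → ℕ) : Prop := ∃ t, Run p σ t τ

theorem Ex.skip {σ} : Ex .skip σ σ := ⟨_, .skip σ⟩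
theorem Ex.inc {i σ τ} (h : τ = update σ i (σ i + 1)) : Ex (.inc i) σ τ := h ▸ ⟨_, .inc i σ⟩
theorem Ex.seq {p q σ υ} (τ) (h : Ex p σ τ) (h' : Ex q τ υ) : Ex (.seq p q) σ υ := by
  obtain ⟨t, h⟩ := h
  obtain ⟨t', h'⟩ := h'
  exact ⟨_, .seq h h'⟩

theorem Ex.loop {i p} (n : ℕ) : ∀ (S : ℕ → ℕ → ℕ)
    (_ : ∀ k < n, S k i ≠ 0 ∧ Ex p (update (S k) i (S k i - 1)) (S (k + 1)))
    (_ : S n i = 0), Ex (.loop i p) (S 0) (S n) := by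
  induction n with
  | zero => intro S _ h; exact ⟨_, .loop0 h⟩
  | succ n ih =>
    intro S h h0
    obtain ⟨t', h'⟩ := ih (fun k => S (k + 1)) (fun k hk => h (k + 1) (by omega)) h0
    obtain ⟨ha, t, hb⟩ := h 0 (by omega)
    exact ⟨_, .loopS (n := S 0 i - 1) (by omega) hb h'⟩

theorem Ex.loop_of {i p σ τ} (n : ℕ) (S : ℕ → ℕ → ℕ) (h0 : σ = S 0) (h1 : τ = S n)
    (h : ∀ k < n, S k i ≠ 0 ∧ Ex p (update (S k) i (S k i - 1)) (S (k + 1)))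
    (h' : S n i = 0) : Ex (.loop i p) σ τ := by
  subst h0 h1
  exact Ex.loop n S h h'

def clearP (i : ℕ) : Prog := .loop i .skip

theorem Ex.clear {i σ τ} (h : τ = update σ i 0) : Ex (clearP i) σ τ := by
  refine Ex.loop_of (σ i) (fun k => update σ i (σ i - k)) (by simp) (by simpa using h) ?_ (by simp)
  intro k hk
  refine ⟨by simp; omega, ?_⟩
  convert Ex.skip using 1
  funext j
  simp only [update_apply]
  split_ifs <;> omega

def moveP (i o : ℕ) : Prog := .loop i (.inc o)

theorem Ex.move {i o σ τ} (hio : i ≠ o) (h : τ = update (update σ i 0) o (σ o + σ i)) :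
    Ex (moveP i o) σ τ := by
  refine Ex.loop_of (σ i) (fun k => update (update σ i (σ i - k)) o (σ o + k)) (by simp)
    (by simpa using h) ?_ (by simp [update_apply, hio])
  intro k hk
  refine ⟨by simp [update_apply, hio]; omega, ?_⟩
  apply Ex.inc
  funext j
  simp only [update_apply]
  split_ifs <;> omega

def copyP (i o t : ℕ) : Prog := .seq (.loop i (.seq (.inc o) (.inc t))) (moveP t i)

theorem Ex.copy {i o t σ τ} (hio : i ≠ o) (hit : i ≠ t) (hot : o ≠ t) (ht : σ t = 0)
    (h : τ = update σ o (σ o + σ i)) : Ex (copyP i o t) σ τ := by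
  refine Ex.seq (update (update (update σ i 0) o (σ o + σ i)) t (σ i)) ?_
    (Ex.move (Ne.symm hit) ?_)
  · refine Ex.loop_of (σ i) (fun k => update (update (update σ i (σ i - k)) o (σ o + k)) t k)
      (by funext j; simp only [update_apply]; split_ifs <;> subst_vars <;> omega) (by simp) ?_
      (by simp [update_apply, hio, hit])
    intro k hk
    refine ⟨by simp [update_apply, hio, hit]; omega, ?_⟩
    refine Ex.seq _ (Ex.inc rfl) (Ex.inc ?_)
    funext j
    simp only [update_apply]
    split_ifs <;> subst_vars <;> omega
  · subst h
    funext j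
    simp only [update_apply]
    split_ifs <;> subst_vars <;> omega

/-- The relation `R` can be computed by a program. -/
def Cmp (n : ℕ) (R : (Fin n → ℕ) → ℕ → Prop) : Prop :=
  ∀ (idx : Fin n → ℕ) (o N : ℕ), (∀ i, idx i < N) → o < N → (∀ i, idx i ≠ o) →
    ∃ p : Prog, ∀ σ z, R (fun i => σ (idx i)) z → σ o = 0 → (∀ j, N ≤ j → σ j = 0) →
      Ex p σ (update σ o z)

theorem Cmp.get {n} (i : Fin n) : Cmp n (fun v z => z = v i) := by
  intro idx o N h1 h2 h3
  refine ⟨copyP (idx i) o N, ?_⟩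
  intro σ z hz ho hN
  have := h1 i
  refine Ex.copy (h3 i) (by omega) (by omega) (hN N le_rfl) ?_
  rw [hz, ho, zero_add]

theorem Cmp.succ : Cmp 1 (fun v z => z = v 0 + 1) := by
  intro idx o N h1 h2 h3
  refine ⟨.seq (copyP (idx 0) o N) (.inc o), ?_⟩
  intro σ z hz ho hN
  have := h1 0
  refine Ex.seq _ (Ex.copy (h3 0) (by omega) (by omega) (hN N le_rfl) rfl) (Ex.inc ?_)
  subst hz
  simp [ho]

theorem Cmp.zero : Cmp 0 (fun _ z => z = 0) := by
  intro idx o N h1 h2 h3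
  refine ⟨.skip, ?_⟩
  intro σ z hz ho hN
  convert Ex.skip using 1
  subst hz
  rw [← ho, update_eq_self]

theorem Cmp.mono {n R R'} (h : Cmp n R) (h' : ∀ v z, R' v z → R v z) : Cmp n R' := by
  intro idx o N h1 h2 h3
  obtain ⟨p, hp⟩ := h idx o N h1 h2 h3
  exact ⟨p, fun σ z hz => hp σ z (h' _ _ hz)⟩

theorem Ex.clearMany (N k : ℕ) : ∃ p, ∀ σ, Ex p σ (fun j => if N ≤ j ∧ j < N + k then 0 else σ j) := by
  induction k with
  | zero =>
    refine ⟨.skip, fun σ => ?_⟩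
    convert Ex.skip using 1
    funext j
    rw [if_neg (by omega)]
  | succ k ih =>
    obtain ⟨p, hp⟩ := ih
    refine ⟨.seq p (clearP (N + k)), fun σ => Ex.seq _ (hp σ) (Ex.clear ?_)⟩
    funext j
    simp only [update_apply]
    split_ifs <;> first | rfl | omega

theorem Cmp.comp {m n : ℕ} {R : (Fin n → ℕ) → ℕ → Prop} {G : Fin n → (Fin m → ℕ) → ℕ → Prop}
    (hR : Cmp n R) (hG : ∀ i, Cmp m (G i)) :
    Cmp m (fun v z => ∃ w : Fin n → ℕ, (∀ i, G i v (w i)) ∧ R w z) := by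
  intro idx o N h1 h2 h3
  have key : ∀ k ≤ n, ∃ p, ∀ σ (w : ℕ → ℕ), (∀ i : Fin n, G i (fun i => σ (idx i)) (w i)) →
      (∀ j, N ≤ j → σ j = 0) →
      Ex p σ (fun j => if N ≤ j ∧ j < N + k then w (j - N) else σ j) := by
    intro k
    induction k with
    | zero =>
      intro _
      refine ⟨.skip, fun σ w _ _ => ?_⟩
      convert Ex.skip using 1
      funext j
      rw [if_neg (by omega)]
    | succ k ih =>
      intro hk
      obtain ⟨p, hp⟩ := ih (by omega)
      obtain ⟨q, hq⟩ := hG ⟨k, hk⟩ idx (N + k) (N + k + 1) (fun i => by have := h1 i; omega)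
        (by omega) (fun i => by have := h1 i; omega)
      refine ⟨.seq p q, fun σ w hw hz => Ex.seq _ (hp σ w hw hz) ?_⟩
      have := hq (fun j => if N ≤ j ∧ j < N + k then w (j - N) else σ j) (w k) ?_ ?_ ?_
      · convert this using 1
        funext j
        simp only [update_apply]
        split_ifs <;> first | rfl | omega | (subst_vars; congr 1; omega)
      · convert hw ⟨k, hk⟩ using 2 with i
        have := h1 i
        rw [if_neg (by omega)]
      · simp [hz]
      · intro j hj
        rw [if_neg (by omega)]
        exact hz j (by omega)
  obtain ⟨p, hp⟩ := key n le_rfl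
  obtain ⟨q, hq⟩ := hR (fun i => N + i) o (N + n) (fun i => by have := i.2; omega) (by omega)
    (fun i => by omega)
  obtain ⟨r, hr⟩ := Ex.clearMany N n
  refine ⟨.seq p (.seq q r), ?_⟩
  rintro σ z ⟨w, hw, hz⟩ ho hN
  let w' : ℕ → ℕ := fun j => if h : j < n then w ⟨j, h⟩ else 0
  have hw' : ∀ i : Fin n, w' i = w i := fun i => by simp [w']
  refine Ex.seq _ (hp σ w' (fun i => by rw [hw']; exact hw i) hN) (Ex.seq _ (hq _ z ?_ ?_ ?_) ?_)
  · convert hz using 2 with i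
    have := i.2
    rw [if_pos (by omega), ← hw' i]
    congr 1
    omega
  · rw [if_neg (by omega)]
    exact ho
  · intro j hj
    rw [if_neg (by omega)]
    exact hN j (by omega)
  · convert hr _ using 1
    funext j
    simp only [update_apply]
    split_ifs <;> first | rfl | omega | (apply hN; omega)

theorem Cmp.prec {n : ℕ} {f : (Fin n → ℕ) → ℕ} {g : (Fin (n + 2) → ℕ) → ℕ}
    (hf : Cmp n (fun v z => z = f v)) (hg : Cmp (n + 2) (fun v z => z = g v)) :
    Cmp (n + 1) (fun v z => z = Nat.rec (f (Fin.tail v))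
      (fun y IH => g (Fin.cons y (Fin.cons IH (Fin.tail v)))) (v 0)) := by
  intro idx o N h1 h2 h3
  obtain ⟨pf, hpf⟩ := hf (Fin.tail idx) (N + 1) (N + 4)
    (fun i => by have := h1 i.succ; simp only [Fin.tail]; omega) (by omega)
    (fun i => by have := h1 i.succ; simp only [Fin.tail]; omega)
  obtain ⟨pg, hpg⟩ := hg (Fin.cons (N + 3) (Fin.cons (N + 1) (Fin.tail idx))) (N + 2) (N + 4)
    (fun i => by
      refine Fin.cases ?_ (fun i => ?_) i
      · simp
      · refine Fin.cases ?_ (fun i => ?_) i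
        · simp
        · have := h1 i.succ
          simp only [Fin.cons_succ, Fin.tail]; omega) (by omega)
    (fun i => by
      refine Fin.cases ?_ (fun i => ?_) i
      · simp
      · refine Fin.cases ?_ (fun i => ?_) i
        · simp
        · have := h1 i.succ
          simp only [Fin.cons_succ, Fin.tail]; omega)
  refine ⟨.seq (copyP (idx 0) N (N + 4)) (.seq pf (.seq (.loop N (.seq pg (.seq (clearP (N + 1))
    (.seq (moveP (N + 2) (N + 1)) (.inc (N + 3)))))) (.seq (moveP (N + 1) o) (clearP (N + 3))))), ?_⟩
  intro σ z hz ho hN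
  have hi0 := h1 0
  have hi3 := h3 0
  set v : Fin (n + 1) → ℕ := fun i => σ (idx i) with hv
  let A : ℕ → ℕ := fun k => Nat.rec (f (Fin.tail v))
      (fun y IH => g (Fin.cons y (Fin.cons IH (Fin.tail v)))) k
  have hz' : z = A (v 0) := hz
  have hA : ∀ k, A (k + 1) = g (Fin.cons k (Fin.cons (A k) (Fin.tail v))) := fun k => rfl
  let S : ℕ → ℕ → ℕ := fun k => update (update (update σ N (v 0 - k)) (N + 1) (A k)) (N + 3) k
  have e0 := hN N (by omega)
  have e1 := hN (N + 1) (by omega)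
  have e2 := hN (N + 2) (by omega)
  have e3 := hN (N + 3) (by omega)
  have e4 := hN (N + 4) (by omega)
  refine Ex.seq _ (Ex.copy (by omega) (by omega) (by omega) (hN _ (by omega)) rfl)
    (Ex.seq _ (hpf _ (f (Fin.tail v)) ?_ ?_ ?_) (Ex.seq _ (Ex.loop_of (v 0) S ?_ rfl ?_ ?_)
    (Ex.seq _ (Ex.move (by omega) rfl) (Ex.clear ?_))))
  · congr 1
    funext i
    have := h1 i.succ
    simp only [Fin.tail, hv]
    rw [update_of_ne (by omega)]
  · rw [update_of_ne (by omega)]; exact e1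
  · intro j hj
    rw [update_of_ne (by omega)]
    exact hN j (by omega)
  · funext j
    have : A 0 = f (Fin.tail v) := rfl
    have hv0 : v 0 = σ (idx 0) := rfl
    simp only [S, update_apply]
    split_ifs <;> subst_vars <;> omega
  · intro k hk
    refine ⟨by simp [S, update_apply]; omega, ?_⟩
    refine Ex.seq _ (hpg _ (A (k + 1)) ?_ ?_ ?_) (Ex.seq _ (Ex.clear rfl)
      (Ex.seq _ (Ex.move (by omega) rfl) (Ex.inc ?_)))
    · rw [hA]
      congr 1
      funext i
      refine Fin.cases ?_ (fun i => ?_) i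
      · simp [S, update_apply]
      · refine Fin.cases ?_ (fun i => ?_) i
        · simp [S, update_apply]
        · have := h1 i.succ
          have e : ∀ x, idx i.succ ≠ N + x := fun x => by omega
          have e' : idx i.succ ≠ N := by omega
          simp [Fin.tail, S, hv, update_apply, e, e']
    · simp [S, update_apply, e2]
    · intro j hj
      simp only [S]
      rw [update_of_ne (by omega), update_of_ne (by omega), update_of_ne (by omega),
            update_of_ne (by omega)]
      exact hN j (by omega)
    · funext j
      simp only [S, update_apply]
      split_ifs <;> subst_vars <;> omega
  · simp [S, update_apply]
  · funext j
    simp only [S, update_apply]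
    split_ifs <;> subst_vars <;> omega

theorem Cmp.rfind {n : ℕ} {f : (Fin (n + 1) → ℕ) → ℕ} (hf : Cmp (n + 1) (fun v z => z = f v)) :
    Cmp n (fun v z => f (Fin.cons z v) = 0 ∧ ∀ k < z, f (Fin.cons k v) ≠ 0) := by
  intro idx o N h1 h2 h3
  obtain ⟨pf, hpf⟩ := hf (Fin.cons N idx) (N + 1) (N + 2)
    (fun i => by
      refine Fin.cases ?_ (fun i => ?_) i
      · simp
      · have := h1 i
        simp only [Fin.cons_succ]; omega) (by omega)
    (fun i => by
      refine Fin.cases ?_ (fun i => ?_) i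
      · simp
      · have := h1 i
        simp only [Fin.cons_succ]; omega)
  refine ⟨.seq pf (.seq (.loop (N + 1) (.seq (clearP (N + 1)) (.seq (.inc N) pf))) (moveP N o)), ?_⟩
  rintro σ z ⟨hz, hk⟩ ho hN
  have e0 := hN N (by omega)
  have e1 := hN (N + 1) (by omega)
  set v : Fin n → ℕ := fun i => σ (idx i) with hv
  let S : ℕ → ℕ → ℕ := fun k => update (update σ N k) (N + 1) (f (Fin.cons k v))
  have hcons : ∀ (τ : ℕ → ℕ) k, τ N = k → (∀ j < N, τ j = σ j) →
      (fun i => τ ((Fin.cons N idx : Fin (n + 1) → ℕ) i)) = Fin.cons k v := by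
    intro τ k hk hτ
    funext i
    refine Fin.cases ?_ (fun i => ?_) i
    · simpa using hk
    · simp [hv, hτ _ (h1 i)]
  refine Ex.seq _ (hpf σ (f (Fin.cons 0 v)) ?_ e1 (fun j hj => hN j (by omega)))
    (Ex.seq _ (Ex.loop_of z S ?_ rfl ?_ ?_) (Ex.move (by omega) ?_))
  · rw [hcons σ 0 e0 (fun _ _ => rfl)]
  · funext j
    simp only [S, update_apply]
    split_ifs <;> subst_vars <;> omega
  · intro k hk'
    refine ⟨by simp [S, update_apply]; exact hk k hk', ?_⟩
    refine Ex.seq _ (Ex.clear rfl) (Ex.seq _ (Ex.inc rfl) ?_)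
    have := hpf (update σ N (k + 1)) (f (Fin.cons (k + 1) v)) ?_ ?_ ?_
    · convert this using 1
      funext j
      simp only [S, update_apply]
      split_ifs <;> subst_vars <;> omega
    · rw [hcons _ (k + 1) (by simp)]
      intro j hj
      rw [update_of_ne (by omega)]
    · rw [update_of_ne (by omega)]; exact e1
    · intro j hj
      rw [update_of_ne (by omega)]
      exact hN j (by omega)
  · simp [S, hz]
  · funext j
    simp only [S, update_apply]
    split_ifs <;> subst_vars <;> omega

theorem Cmp.of_primrec {n} {f : List.Vector ℕ n → ℕ} (hf : Nat.Primrec' f) :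
    Cmp n (fun v z => z = f (List.Vector.ofFn v)) := by
  induction hf with
  | zero => exact Cmp.zero
  | succ => refine Cmp.succ.mono fun v z h => ?_; simpa using h
  | get i => refine (Cmp.get i).mono fun v z h => ?_; simpa using h
  | comp g hf hg ihf ihg =>
    refine (Cmp.comp ihf ihg).mono fun v z h => ?_
    exact ⟨fun i => g i (List.Vector.ofFn v), fun i => rfl, h⟩
  | prec hf hg ihf ihg =>
    refine (Cmp.prec ihf ihg).mono fun v z h => ?_
    rw [h]
    rfl

theorem mem_mOfFn {n} : ∀ {g : Fin n → Part ℕ} {w : List.Vector ℕ n},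
    w ∈ List.Vector.mOfFn g → ∀ i, w.get i ∈ g i := by
  induction n with
  | zero => intro g w _ i; exact i.elim0
  | succ n ih =>
    intro g w hw i
    simp only [List.Vector.mOfFn, Part.bind_eq_bind, Part.mem_bind_iff, Part.pure_eq_some,
      Part.mem_some_iff] at hw
    obtain ⟨a, ha, v, hv, rfl⟩ := hw
    refine Fin.cases ?_ (fun i => ?_) i
    · simpa using ha
    · simpa using ih hv i

theorem Cmp.of_partrec {n} {f : List.Vector ℕ n →. ℕ} (hf : Nat.Partrec' f) :
    Cmp n (fun v z => z ∈ f (List.Vector.ofFn v)) := by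
  induction hf with
  | prim hf => refine (Cmp.of_primrec hf).mono fun v z h => ?_; simpa using h
  | comp g hf hg ihf ihg =>
    refine (Cmp.comp ihf ihg).mono fun v z h => ?_
    obtain ⟨w, hw, hz⟩ := Part.mem_bind_iff.1 h
    refine ⟨w.get, fun i => mem_mOfFn hw i, ?_⟩
    simpa using hz
  | @rfind n f hf ih =>
    have h1 : Cmp (n + 1) (fun v z => z = f (List.Vector.ofFn v)) :=
      ih.mono fun v z h => by simpa using h
    refine (Cmp.rfind h1).mono fun v z h => ?_
    replace h := Nat.mem_rfind.1 h
    obtain ⟨h2, h3⟩ := h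
    have hc : ∀ k, List.Vector.ofFn (Fin.cons k v : Fin (n + 1) → ℕ) = k ::ᵥ List.Vector.ofFn v :=
      fun k => by simp [List.Vector.ofFn]
    refine ⟨?_, fun k hk => ?_⟩
    · rw [hc]; simpa using h2
    · rw [hc]; simpa using h3 hk

theorem exists_prog (φ : ℕ →. ℕ) (hφ : Partrec φ) : ∃ p : Prog, ∀ n z, z ∈ φ n →
    ∃ t, Run p (update (fun _ => 0) 0 n) t (update (update (fun _ => 0) 0 n) 1 z) := by
  obtain ⟨p, hp⟩ := Cmp.of_partrec (Nat.Partrec'.part_iff₁.2 hφ) (fun _ => 0) 1 2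
    (by simp) (by simp) (by simp)
  refine ⟨p, fun n z hz => hp _ z ?_ (by simp) ?_⟩
  · simpa using hz
  · intro j hj
    rw [update_of_ne (by omega)]

end NC


/-! ### From networks to deterministic systems -/

namespace NC

theorem prob_zero_of {Ω : Type} {p : Ω → ℝ} (hp : IsProb p) {S : Set Ω} (hS : Pr p S = 1)
    {ω : Ω} (hω : ω ∉ S) : p ω = 0 := by
  obtain ⟨h0, h1⟩ := hp
  unfold Pr at *
  have hs : Summable (fun x : (Set.univ : Set Ω) => p x) := by
    by_contra h
    rw [tsum_eq_zero_of_not_summable h] at h1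
    exact zero_ne_one h1
  have hs' : Summable p :=
    (Equiv.Set.univ Ω).summable_iff.1 hs
  rw [tsum_univ p] at h1
  have := hs'.tsum_subtype_add_tsum_subtype_compl S
  rw [h1, hS] at this
  have h2 : ∑' x : ↑Sᶜ, p x = 0 := by linarith
  have h3 : Summable (fun x : ↑Sᶜ => p x) := hs'.subtype _
  have h4 := (h3.hasSum.tsum_eq ▸ h3.hasSum)
  rw [h2] at h4
  have := (hasSum_zero_iff_of_nonneg (fun x : ↑Sᶜ => h0 x)).1 h4
  exact congrFun this ⟨ω, hω⟩

theorem exists_of_pr_ne {Ω : Type} {p : Ω → ℝ} {S : Set Ω} (hS : Pr p S ≠ 0) :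
    ∃ ω ∈ S, p ω ≠ 0 := by
  by_contra h
  push Not at h
  apply hS
  unfold Pr
  rw [show (fun ω : S => p ω) = fun _ => 0 from funext fun ω => h ω ω.2]
  exact tsum_zero

theorem funcOf_of {Ω α β : Type} {p : Ω → ℝ} (hp : IsProb p) [Nonempty α] {X : Ω → α} {Y : Ω → β}
    (h : ∀ ω ω', Y ω = Y ω' → X ω = X ω') : FuncOf p X Y := by
  refine ⟨fun y => if hy : ∃ ω, Y ω = y then X hy.choose else Classical.arbitrary α, ?_⟩
  convert hp.2
  rw [Set.eq_univ_iff_forall]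
  intro ω
  have hy : ∃ ω', Y ω' = Y ω := ⟨ω, rfl⟩
  simp only [Set.mem_ofPred_eq]
  rw [dif_pos hy]
  exact h _ _ hy.choose_spec.symm

/-- The network attached to a system of consumers: for `t < M` the consumer `t` emits signal `t`. -/
def netOf (M N : ℕ) (inp : ℕ → List ℕ × List ℕ) (dm : ℕ → List ℕ) : Network :=
  (2 * N, 4,
    (List.range M).map (fun j => (2 * j, 2 * j + 1)) ++
      (List.range N).flatMap (fun t => (inp t).2.map fun i => (2 * i + 1, 2 * t)),
    (List.range (2 * N)).map (fun v => if v % 2 = 0 then (inp (v / 2)).1 else []),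
    (List.range (2 * N)).map (fun v => if v % 2 = 0 then dm (v / 2) else []))

/-- Well-formedness of the system. -/
structure WF (M N : ℕ) (inp : ℕ → List ℕ × List ℕ) (dm : ℕ → List ℕ) : Prop where
  le : M ≤ N
  lt : ∀ t < N, ∀ i ∈ (inp t).2, i < t ∧ i < M
  msg : ∀ t < N, ∀ i ∈ (inp t).1, i < 4
  dms : ∀ t < N, ∀ i ∈ dm t, i < 4

theorem netOf_valid {M N inp dm} (h : WF M N inp dm) : NetworkValid (netOf M N inp dm) := by
  have hle := h.le
  refine ⟨?_, ⟨id, ?_⟩, ?_, ?_, ?_, ?_⟩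
  · intro e he
    simp only [List.mem_append, List.mem_map, List.mem_range, List.mem_flatMap] at he
    rcases he with ⟨j, hj, rfl⟩ | ⟨t, ht, i, hi, rfl⟩
    · simp only; omega
    · have := h.lt t ht i hi
      simp only; omega
  · intro e he
    simp only [List.mem_append, List.mem_map, List.mem_range, List.mem_flatMap] at he
    rcases he with ⟨j, hj, rfl⟩ | ⟨t, ht, i, hi, rfl⟩
    · simp
    · have := h.lt t ht i hi
      simp only [id]; omega
  · simp
  · simp
  · intro l hl i hi
    simp only [List.mem_map, List.mem_range] at hl
    obtain ⟨v, hv, rfl⟩ := hl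
    split_ifs at hi
    · exact h.msg _ (by omega) i hi
    · simp at hi
  · intro l hl i hi
    simp only [List.mem_map, List.mem_range] at hl
    obtain ⟨v, hv, rfl⟩ := hl
    split_ifs at hi
    · exact h.dms _ (by omega) i hi
    · simp at hi

/-- Deterministic solutions of a system. -/
def Sol (q M N : ℕ) (inp : ℕ → List ℕ × List ℕ) (dm : ℕ → List ℕ)
    (X : ℕ → (Fin 4 → Fin q) → Fin q) : Prop :=
  ∀ t < N, ∀ m m' : Fin 4 → Fin q, (∀ i ∈ (inp t).1, m (Fin.ofNat 4 i) = m' (Fin.ofNat 4 i)) →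
    (∀ i ∈ (inp t).2, X i m = X i m') →
    (t < M → X t m = X t m') ∧ ∀ d ∈ dm t, m (Fin.ofNat 4 d) = m' (Fin.ofNat 4 d)

section edges
variable (M N : ℕ) (inp : ℕ → List ℕ × List ℕ)

def edgesOf : List (ℕ × ℕ) := (List.range M).map (fun j => (2 * j, 2 * j + 1)) ++
      (List.range N).flatMap (fun t => (inp t).2.map fun i => (2 * i + 1, 2 * t))

theorem edges_fst {e : ℕ} (he : e < M) : e < (edgesOf M N inp).length ∧
    (edgesOf M N inp).getD e (0, 0) = (2 * e, 2 * e + 1) := by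
  refine ⟨by simp [edgesOf]; omega, ?_⟩
  unfold edgesOf
  rw [List.getD_append _ _ _ _ (by simpa using he)]
  simp [List.getD, he]

theorem edges_snd {e : ℕ} (he : M ≤ e) (he' : e < (edgesOf M N inp).length) :
    ∃ t < N, ∃ i ∈ (inp t).2, (edgesOf M N inp).getD e (0, 0) = (2 * i + 1, 2 * t) := by
  have h2 : (edgesOf M N inp).getD e (0, 0) ∈
      (List.range N).flatMap (fun t => (inp t).2.map fun i => (2 * i + 1, 2 * t)) := by
    unfold edgesOf at *
    rw [List.getD_append_right _ _ _ _ (by simpa using he)]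
    simp only [List.length_append, List.length_map, List.length_range] at he' ⊢
    rw [List.getD_eq_getElem _ _ (by omega)]
    exact List.getElem_mem _
  simp only [List.mem_flatMap, List.mem_range, List.mem_map] at h2
  obtain ⟨t, ht, i, hi, h⟩ := h2
  exact ⟨t, ht, i, hi, h.symm⟩

theorem edges_exists {t i : ℕ} (ht : t < N) (hi : i ∈ (inp t).2) :
    ∃ e, M ≤ e ∧ e < (edgesOf M N inp).length ∧
      (edgesOf M N inp).getD e (0, 0) = (2 * i + 1, 2 * t) := by
  have h2 : (2 * i + 1, 2 * t) ∈
      (List.range N).flatMap (fun t => (inp t).2.map fun i => (2 * i + 1, 2 * t)) := by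
    simp only [List.mem_flatMap, List.mem_range, List.mem_map]
    exact ⟨t, ht, i, hi, rfl⟩
  obtain ⟨k, hk, hk'⟩ := List.getElem_of_mem h2
  refine ⟨M + k, by omega, by simp only [edgesOf, List.length_append, List.length_map, List.length_range]; omega, ?_⟩
  unfold edgesOf
  rw [List.getD_append_right _ _ _ _ (by simp)]
  simp only [List.length_map, List.length_range, Nat.add_sub_cancel_left]
  rw [List.getD_eq_getElem _ _ hk]
  exact hk'

theorem mem_inEdges {E : List (ℕ × ℕ)} {v e : ℕ} : e ∈ inEdges E v ↔
    e < E.length ∧ (E.getD e (0, 0)).2 = v := by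
  simp [inEdges]

theorem mem_outEdges {E : List (ℕ × ℕ)} {v e : ℕ} : e ∈ outEdges E v ↔
    e < E.length ∧ (E.getD e (0, 0)).1 = v := by
  simp [outEdges]

theorem map_getD {f : ℕ → List ℕ} {n v : ℕ} (h : v < n) :
    ((List.range n).map f).getD v [] = f v := by
  simp [List.getD, h]

end edges

theorem sol_of_solvable {M N inp dm q} (h : WF M N inp dm) (hq : 0 < q)
    (hs : SolvableWith (netOf M N inp dm) q) : ∃ X, Sol q M N inp dm X := by
  obtain ⟨Ω, p, hp, Ms, X, hM, hv⟩ := hs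
  have hex : ∀ m : Fin 4 → Fin q, ∃ ω, p ω ≠ 0 ∧ ∀ i < 4, Ms i ω = m (Fin.ofNat 4 i) := by
    intro m
    obtain ⟨ω, h1, h2⟩ := exists_of_pr_ne (p := p)
      (S := {ω | ∀ i < 4, Ms i ω = (fun i => m (Fin.ofNat 4 i)) i}) (by
        rw [hM]; positivity)
    exact ⟨ω, h2, h1⟩
  choose w hw hw' using hex
  have hF : ∀ v < 2 * N, ∀ m m', 
      (((netOf M N inp dm).2.2.2.1.getD v []).map fun i => Ms i (w m)) = 
      (((netOf M N inp dm).2.2.2.1.getD v []).map fun i => Ms i (w m')) →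
      ((inEdges (edgesOf M N inp) v).map fun e => X e (w m)) = 
      ((inEdges (edgesOf M N inp) v).map fun e => X e (w m')) →
      (((netOf M N inp dm).2.2.2.2.getD v []).map fun i => Ms i (w m)) = 
      (((netOf M N inp dm).2.2.2.2.getD v []).map fun i => Ms i (w m')) ∧
      ((outEdges (edgesOf M N inp) v).map fun e => X e (w m)) = 
      ((outEdges (edgesOf M N inp) v).map fun e => X e (w m')) := by
    intro v hv' m m' h1 h2
    obtain ⟨f, hf⟩ := hv v hv'
    have key : ∀ m, w m ∈ {ω | _ = _} := fun m => by
      by_contra hcon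
      exact hw m (prob_zero_of hp hf hcon)
    have k1 := key m
    have k2 := key m'
    simp only [Set.mem_ofPred_eq] at k1 k2
    have := k1.trans ((congrArg f (Prod.ext h1 h2)).trans k2.symm)
    exact Prod.ext_iff.1 this
  refine ⟨fun t m => X t (w m), ?_⟩
  intro t ht m m' hm hX
  have := hF (2 * t) (by omega) m m' ?_ ?_
  · obtain ⟨h1, h2⟩ := this
    constructor
    · intro htM
      obtain ⟨e1, e2⟩ := edges_fst M N inp htM
      exact List.map_inj_left.1 h2 t (mem_outEdges.2 ⟨e1, by rw [e2]⟩)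
    · intro d hd
      simp only [netOf] at h1
      rw [map_getD (by omega), if_pos (by omega), Nat.mul_div_cancel_left _ (by omega)] at h1
      have := List.map_inj_left.1 h1 d hd
      have hd4 := h.dms t ht d hd
      rwa [hw' m d hd4, hw' m' d hd4] at this
  · simp only [netOf]
    rw [map_getD (by omega), if_pos (by omega), Nat.mul_div_cancel_left _ (by omega)]
    apply List.map_congr_left
    intro i hi
    have hd4 := h.msg t ht i hi
    rw [hw' m i hd4, hw' m' i hd4]
    exact hm i hi
  · apply List.map_congr_left
    intro e he
    rw [mem_inEdges] at he
    rcases lt_or_ge e M with heM | heM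
    · rw [(edges_fst M N inp heM).2] at he
      simp only at he; omega
    · obtain ⟨t', ht', i, hi, he2⟩ := edges_snd M N inp heM he.1
      rw [he2] at he
      obtain rfl : t' = t := by have := he.2; simp only at this; omega
      have hlt := h.lt _ ht i hi
      refine List.map_inj_left.1 (hF (2 * i + 1) (by omega) m m' ?_ ?_).2 e
        (mem_outEdges.2 ⟨he.1, by rw [he2]⟩)
      · simp only [netOf]
        rw [map_getD (by omega), if_neg (by omega)]
        rfl
      · apply List.map_congr_left
        intro e' he'
        rw [mem_inEdges] at he'
        rcases lt_or_ge e' M with heM' | heM'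
        · rw [(edges_fst M N inp heM').2] at he'
          obtain rfl : e' = i := by have := he'.2; simp only at this; omega
          exact hX _ hi
        · obtain ⟨t'', ht'', i'', hi'', he''⟩ := edges_snd M N inp heM' he'.1
          rw [he''] at he'
          have := he'.2; simp only at this; omega

theorem solvable_of_sol {M N inp dm q} (h : WF M N inp dm) (hq : 0 < q)
    {X} (hX : Sol q M N inp dm X) : SolvableWith (netOf M N inp dm) q := by
  let p : (Fin 4 → Fin q) → ℝ := fun _ => ((q : ℝ))⁻¹ ^ 4
  have hq' : (q : ℝ) ≠ 0 := by positivity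
  have hp : IsProb p := by
    refine ⟨fun _ => by positivity, ?_⟩
    unfold Pr
    rw [tsum_univ p, tsum_fintype]
    simp only [p, Finset.sum_const, Finset.card_univ, Fintype.card_fun, Fintype.card_fin, nsmul_eq_mul]
    push_cast
    field_simp
  have : Nonempty (Fin q) := ⟨⟨0, hq⟩⟩
  let src : ℕ → ℕ := fun e => if e < M then e else (((edgesOf M N inp).getD e (0, 0)).1 - 1) / 2
  refine ⟨Fin 4 → Fin q, p, hp, fun i ω => ω (Fin.ofNat 4 i), fun e ω => X (src e) ω, ?_, ?_⟩
  · intro m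
    have : {ω : Fin 4 → Fin q | ∀ i < 4, ω (Fin.ofNat 4 i) = m i} = {fun i : Fin 4 => m i.val} := by
      ext ω
      simp only [Set.mem_ofPred_eq, Set.mem_singleton_iff]
      constructor
      · intro h
        funext i
        rw [← h i i.2]
        simp
      · rintro rfl i hi
        simp [Nat.mod_eq_of_lt hi]
    rw [this]
    unfold Pr
    rw [tsum_fintype]
    simp [p]
  · intro v hv
    apply funcOf_of hp
    intro m m' hmm
    obtain ⟨h1, h2⟩ := Prod.ext_iff.1 hmm
    simp only [netOf] at h1 h2 ⊢
    rw [map_getD hv] at h1 ⊢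
    change ((inEdges (edgesOf M N inp) v).map fun e => X (src e) m) =
      ((inEdges (edgesOf M N inp) v).map fun e => X (src e) m') at h2
    change (_, (outEdges (edgesOf M N inp) v).map fun e => X (src e) m) =
      (_, (outEdges (edgesOf M N inp) v).map fun e => X (src e) m')
    rcases Nat.even_or_odd' v with ⟨t, rfl | rfl⟩
    · rw [if_pos (by omega), Nat.mul_div_cancel_left _ (by omega)] at h1 ⊢
      have ht : t < N := by omega
      obtain ⟨k1, k2⟩ := hX t ht m m' (List.map_inj_left.1 h1) (by
        intro i hi
        obtain ⟨e, e1, e2, e3⟩ := edges_exists M N inp ht hi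
        have := List.map_inj_left.1 h2 e (mem_inEdges.2 ⟨e2, by rw [e3]⟩)
        have hs : src e = i := by
          simp only [src]
          rw [if_neg (by omega), e3]
          simp only; omega
        rwa [hs] at this)
      refine Prod.ext (List.map_congr_left k2) (List.map_congr_left ?_)
      intro e he
      rw [mem_outEdges] at he
      rcases lt_or_ge e M with heM | heM
      · rw [(edges_fst M N inp heM).2] at he
        obtain rfl : e = t := by have := he.2; simp only at this; omega
        simp only [src, if_pos heM]
        exact k1 heM
      · obtain ⟨t', ht', i, hi, he2⟩ := edges_snd M N inp heM he.1
        rw [he2] at he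
        have := he.2; simp only at this; omega
    · rw [if_neg (by omega)]
      refine Prod.ext rfl (List.map_congr_left ?_)
      intro e he
      rw [mem_outEdges] at he
      rcases lt_or_ge e M with heM | heM
      · rw [(edges_fst M N inp heM).2] at he
        have := he.2; simp only at this; omega
      · obtain ⟨t', ht', i, hi, he2⟩ := edges_snd M N inp heM he.1
        rw [he2] at he
        obtain rfl : i = t := by have := he.2; simp only at this; omega
        have hs : src e = i := by
          simp only [src]
          rw [if_neg (by omega), he2]
          simp only; omega
        have hlt := h.lt _ ht' i hi
        have := List.map_inj_left.1 h2 i (mem_inEdges.2 ⟨(edges_fst M N inp hlt.2).1, by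
          rw [(edges_fst M N inp hlt.2).2]⟩)
        rw [hs]
        simpa only [src, if_pos hlt.2] using this

end NC


/-! ### The algebra of the gadget -/

namespace NC

theorem surj_of_inj {T : Type} [Finite T] {f : T → T} (h : ∀ a b, f a = f b → a = b) :
    ∀ y, ∃ x, f x = y :=
  Finite.injective_iff_surjective.1 (fun a b => h a b)

theorem gadget_algebra {T : Type} [Finite T] (o : T) (m : ℕ) (hm : 0 < m) (x y z : ℕ → T → T → T)
    (C : ℕ → ℕ → ℕ → Prop) (Zr : ℕ → Prop)
    (hC : ∀ f g h, C f g h → ∀ a b c a' b' c', x f a b = x f a' b' → y g b c = y g b' c' →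
      z h a c = z h a' c')
    (hZ : ∀ h, Zr h → ∀ a c c', z h a c = z h a c')
    (hinj : ∀ f < m, ∀ a a' c, z f a c = z f a' c → a = a')
    (h1 : ∀ f < m, C f 0 f) (h2 : ∀ f < m, C 0 f f)
    (hz : ∀ a c c', z 0 a c = z 0 a c' → c = c')
    (hx : ∀ a b b', x 0 a b = x 0 a b' → b = b') :
    ∃ E : ℕ → T → T, (∀ f < m, E f o = o) ∧ (∀ c, E 0 c = c) ∧
      (∀ f g h, f < m → g < m → h < m → C f g h → ∀ c, E h c = E f (E g c)) ∧
      (∀ h < m, Zr h → ∀ c, E h c = o) ∧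
      (∀ F : List ℕ, (∀ f ∈ F, f < m) → (∀ a b b', (∀ f ∈ F, x f a b = x f a b') → b = b') →
        ∀ c c', (∀ f ∈ F, E f c = E f c') → c = c') := by
  have xinj : ∀ f < m, ∀ b a a', x f a b = x f a' b → a = a' := fun f hf b a a' h =>
    hinj f hf a a' o (hC f 0 f (h1 f hf) _ _ _ _ _ _ h rfl)
  have xsurj : ∀ f < m, ∀ b v, ∃ a, x f a b = v := fun f hf b => surj_of_inj (xinj f hf b)
  have yinj : ∀ f < m, ∀ c b b', y f b c = y f b' c → b = b' := by
    intro f hf c b b' h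
    obtain ⟨a1, ha1⟩ := xsurj 0 hm b' (x 0 o b)
    have := hinj f hf _ _ c (hC 0 f f (h2 f hf) _ _ _ _ _ _ ha1 h.symm)
    subst this
    exact (hx _ _ _ ha1).symm
  have ysurj : ∀ f < m, ∀ c v, ∃ b, y f b c = v := fun f hf c => surj_of_inj (yinj f hf c)
  have conv : ∀ f < m, ∀ a a' b b' c c', x 0 a b = x 0 a' b' → z f a c = z f a' c' →
      y f b c = y f b' c' := by
    intro f hf a a' b b' c c' e1 e2
    obtain ⟨b1, hb1⟩ := ysurj f hf c' (y f b c)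
    obtain ⟨a1, ha1⟩ := xsurj 0 hm b1 (x 0 a b)
    have e3 := hC 0 f f (h2 f hf) _ _ _ _ _ _ ha1 hb1
    have := hinj f hf _ _ _ (e3.trans e2)
    subst this
    rw [← hb1, hx _ _ _ (ha1.trans e1)]
  have reg : ∀ f < m, ∀ g < m, ∀ a a' c c' d d', z f a c = z f a' c' → z g a d = z g a' d' →
      ∀ a1 a1', z f a1 c = z f a1' c' → z g a1 d = z g a1' d' := by
    intro f hf g hg a a' c c' d d' e1 e2 a1 a1' e3
    obtain ⟨b', hb'⟩ := surj_of_inj (hx a') (x 0 a o)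
    have y1 := conv f hf _ _ _ _ _ _ hb'.symm e1
    have y2 := conv g hg _ _ _ _ _ _ hb'.symm e2
    obtain ⟨a2, ha2⟩ := xsurj 0 hm b' (x 0 a1 o)
    have e4 := hC 0 f f (h2 f hf) _ _ _ _ _ _ ha2.symm y1
    obtain rfl := hinj f hf _ _ _ (e4.symm.trans e3)
    exact hC 0 g g (h2 g hg) _ _ _ _ _ _ ha2.symm y2
  have zsurj : ∀ f < m, ∀ c v, ∃ a, z f a c = v := fun f hf c =>
    surj_of_inj (fun a a' h => hinj f hf a a' c h)
  have hE : ∀ f c, ∃ e, f < m → ∃ a a', z f a c = z f a' o ∧ z 0 a e = z 0 a' o := by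
    intro f c
    by_cases hf : f < m
    · obtain ⟨a', ha'⟩ := zsurj f hf o (z f o c)
      obtain ⟨e, he⟩ := surj_of_inj (hz o) (z 0 a' o)
      exact ⟨e, fun _ => ⟨o, a', ha'.symm, he⟩⟩
    · exact ⟨o, fun h => absurd h hf⟩
  choose E hE' using hE
  have S : ∀ f < m, ∀ c a a', z f a c = z f a' o → z 0 a (E f c) = z 0 a' o := by
    intro f hf c a a' h
    obtain ⟨a1, a1', e1, e2⟩ := hE' f c hf
    exact reg f hf 0 hm _ _ _ _ _ _ e1 e2 _ _ h
  refine ⟨E, ?_, ?_, ?_, ?_, ?_⟩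
  · intro f hf
    exact hz _ _ _ (S f hf o o o rfl)
  · intro c
    obtain ⟨a', ha'⟩ := zsurj 0 hm o (z 0 o c)
    exact hz _ _ _ ((S 0 hm c o a' ha'.symm).trans ha')
  · intro f g h hf hg hh hc c
    obtain ⟨a0, a0', e1, e2⟩ := hE' g c hg
    obtain ⟨b', hb'⟩ := surj_of_inj (hx a0') (x 0 a0 o)
    have y1 := conv g hg _ _ _ _ _ _ hb'.symm e1
    have y2 := conv 0 hm _ _ _ _ _ _ hb'.symm e2
    obtain ⟨a', ha'⟩ := xsurj f hf b' (x f o o)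
    have z1 := hC f 0 f (h1 f hf) _ _ _ _ _ _ ha'.symm y2
    have z2 := hC f g h hc _ _ _ _ _ _ ha'.symm y1
    exact hz _ _ _ ((S h hh _ _ _ z2).trans (S f hf _ _ _ z1).symm)
  · intro h hh hzr c
    exact hz _ _ _ (S h hh c o o (hZ h hzr _ _ _))
  · intro F hF hcov c c' hcc
    obtain ⟨b', hb'⟩ := ysurj 0 hm c' (y 0 o c)
    have key : o = b' := by
      apply hcov o
      intro f hf
      have hfm := hF f hf
      obtain ⟨a1, ha1⟩ := zsurj f hfm o (z f o c)
      obtain ⟨a2, ha2⟩ := zsurj f hfm o (z f o c')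
      have s1 := S f hfm _ _ _ ha1.symm
      have s2 := S f hfm _ _ _ ha2.symm
      rw [hcc f hf, s2] at s1
      obtain rfl := hinj 0 hm _ _ _ s1
      obtain ⟨a3, ha3⟩ := xsurj f hfm b' (x f o o)
      have z1 := hC f 0 f (h1 f hfm) _ _ _ _ _ _ ha3 hb'
      have := hinj f hfm _ _ _ (z1.trans (ha1.symm.trans ha2))
      rw [← ha3, this]
    subst key
    exact hz o _ _ (hC 0 0 0 (h1 0 hm) _ _ _ _ _ _ rfl hb'.symm)

end NC


/-! ### The gadget system -/

namespace NC

abbrev Dep : Type := ℕ × (List ℕ × List ℕ)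
abbrev Dem : Type := (List ℕ × List ℕ) × List ℕ

def gInp (m : ℕ) (deps : List Dep) (ext : List Dem) (t : ℕ) : List ℕ × List ℕ :=
  if t < 3 * m then
    (if t % 3 = 0 then ([0, 1], []) else if t % 3 = 1 then ([1, 2], []) else ([0, 2], []))
  else if t < 3 * m + deps.length then
    ([3], [3 * (deps.getD (t - 3 * m) (0, [], [])).1 + 2])
  else if t < 3 * m + deps.length + deps.length then
    ((deps.getD (t - (3 * m + deps.length)) (0, [], [])).2.1,
      (t - deps.length) :: (deps.getD (t - (3 * m + deps.length)) (0, [], [])).2.2)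
  else if t < 3 * m + deps.length + deps.length + deps.length then
    ([3, 1, 2], [t - deps.length - deps.length])
  else
    (ext.getD (t - (3 * m + deps.length + deps.length + deps.length)) (([], []), [])).1

def gDm (m : ℕ) (deps : List Dep) (ext : List Dem) (t : ℕ) : List ℕ :=
  if t < 3 * m + deps.length then []
  else if t < 3 * m + deps.length + deps.length then [3]
  else if t < 3 * m + deps.length + deps.length + deps.length then [0]
  else (ext.getD (t - (3 * m + deps.length + deps.length + deps.length)) (([], []), [])).2

def gM (m : ℕ) (deps : List Dep) : ℕ := 3 * m + deps.length
def gN (m : ℕ) (deps : List Dep) (ext : List Dem) : ℕ :=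
  3 * m + deps.length + deps.length + deps.length + ext.length

def gNet (m : ℕ) (deps : List Dep) (ext : List Dem) : Network :=
  netOf (gM m deps) (gN m deps ext) (gInp m deps ext) (gDm m deps ext)

/-- Well-formed dependencies. -/
structure GWF (m : ℕ) (deps : List Dep) (ext : List Dem) : Prop where
  h : ∀ d ∈ deps, d.1 < m
  msg : ∀ d ∈ deps, ∀ i ∈ d.2.1, i < 3
  sig : ∀ d ∈ deps, ∀ i ∈ d.2.2, i < 3 * m
  emsg : ∀ d ∈ ext, ∀ i ∈ d.1.1, i < 3
  esig : ∀ d ∈ ext, ∀ i ∈ d.1.2, i < 3 * m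
  edem : ∀ d ∈ ext, ∀ i ∈ d.2, i < 4

theorem getD_mem' {α : Type} {l : List α} {k : ℕ} (h : k < l.length) (d : α) : l.getD k d ∈ l := by
  rw [List.getD_eq_getElem _ _ h]
  exact List.getElem_mem _

theorem GWF.wf {m deps ext} (h : GWF m deps ext) :
    WF (gM m deps) (gN m deps ext) (gInp m deps ext) (gDm m deps ext) := by
  refine ⟨by unfold gM gN; omega, ?_, ?_, ?_⟩
  · intro t ht i hi
    unfold gM
    unfold gN at ht
    unfold gInp at hi
    split_ifs at hi with c1 c2 c3 c4 c5 c6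
    · simp at hi
    · simp at hi
    · simp at hi
    · simp only [List.mem_singleton] at hi
      have := h.h _ (getD_mem' (k := t - 3 * m) (by omega) (0, [], []))
      omega
    · simp only [List.mem_cons] at hi
      rcases hi with hi | hi
      · omega
      · have := h.sig _ (getD_mem' (k := t - (3 * m + deps.length)) (by omega) (0, [], [])) _ hi
        omega
    · simp only [List.mem_singleton] at hi
      omega
    · have := h.esig _ (getD_mem' (k := t - (3 * m + deps.length + deps.length + deps.length))
        (by omega) (([], []), [])) _ hi
      omega
  · intro t ht i hi
    unfold gN at ht
    unfold gInp at hi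
    split_ifs at hi with c1 c2 c3 c4 c5 c6
    · simp at hi; omega
    · simp at hi; omega
    · simp at hi; omega
    · simp at hi; omega
    · have := h.msg _ (getD_mem' (k := t - (3 * m + deps.length)) (by omega) (0, [], [])) _ hi
      omega
    · simp at hi; omega
    · have := h.emsg _ (getD_mem' (k := t - (3 * m + deps.length + deps.length + deps.length))
        (by omega) (([], []), [])) _ hi
      omega
  · intro t ht i hi
    unfold gN at ht
    unfold gDm at hi
    split_ifs at hi with c1 c2 c3
    · simp at hi
    · simp at hi; omega
    · simp at hi; omega
    · exact h.edem _ (getD_mem' (k := t - (3 * m + deps.length + deps.length + deps.length))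
        (by omega) (([], []), [])) _ hi

theorem sol_basic {q m deps ext X}
    (hX : Sol q (gM m deps) (gN m deps ext) (gInp m deps ext) (gDm m deps ext) X) {i : ℕ}
    (hi : i < m) (u v : Fin 4 → Fin q) :
    (u 0 = v 0 → u 1 = v 1 → X (3 * i) u = X (3 * i) v) ∧
    (u 1 = v 1 → u 2 = v 2 → X (3 * i + 1) u = X (3 * i + 1) v) ∧
    (u 0 = v 0 → u 2 = v 2 → X (3 * i + 2) u = X (3 * i + 2) v) := by
  refine ⟨fun e1 e2 => ?_, fun e1 e2 => ?_, fun e1 e2 => ?_⟩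
  · refine (hX (3 * i) (by unfold gN; omega) u v ?_ ?_).1 (by unfold gM; omega)
    · unfold gInp
      rw [if_pos (by omega), if_pos (by omega)]
      simp only [List.mem_cons, List.not_mem_nil, or_false]
      rintro j (rfl | rfl)
      · exact e1
      · exact e2
    · unfold gInp
      rw [if_pos (by omega), if_pos (by omega)]
      simp
  · refine (hX (3 * i + 1) (by unfold gN; omega) u v ?_ ?_).1 (by unfold gM; omega)
    · unfold gInp
      rw [if_pos (by omega), if_neg (by omega), if_pos (by omega)]
      simp only [List.mem_cons, List.not_mem_nil, or_false]
      rintro j (rfl | rfl)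
      · exact e1
      · exact e2
    · unfold gInp
      rw [if_pos (by omega), if_neg (by omega), if_pos (by omega)]
      simp
  · refine (hX (3 * i + 2) (by unfold gN; omega) u v ?_ ?_).1 (by unfold gM; omega)
    · unfold gInp
      rw [if_pos (by omega), if_neg (by omega), if_neg (by omega)]
      simp only [List.mem_cons, List.not_mem_nil, or_false]
      rintro j (rfl | rfl)
      · exact e1
      · exact e2
    · unfold gInp
      rw [if_pos (by omega), if_neg (by omega), if_neg (by omega)]
      simp

theorem sol_ext {q m deps ext X}
    (hX : Sol q (gM m deps) (gN m deps ext) (gInp m deps ext) (gDm m deps ext) X) {d : Dem}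
    (hd : d ∈ ext) (u v : Fin 4 → Fin q)
    (h1 : ∀ i ∈ d.1.1, u (Fin.ofNat 4 i) = v (Fin.ofNat 4 i)) (h2 : ∀ i ∈ d.1.2, X i u = X i v) :
    ∀ i ∈ d.2, u (Fin.ofNat 4 i) = v (Fin.ofNat 4 i) := by
  obtain ⟨k, hk, rfl⟩ := List.getElem_of_mem hd
  set t := 3 * m + deps.length + deps.length + deps.length + k with ht
  have hi : gInp m deps ext t = ext[k].1 := by
    unfold gInp
    rw [if_neg (by omega), if_neg (by omega), if_neg (by omega), if_neg (by omega)]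
    rw [ht, Nat.add_sub_cancel_left, List.getD_eq_getElem _ _ hk]
  have hj : gDm m deps ext t = ext[k].2 := by
    unfold gDm
    rw [if_neg (by omega), if_neg (by omega), if_neg (by omega)]
    rw [ht, Nat.add_sub_cancel_left, List.getD_eq_getElem _ _ hk]
  have := (hX t (by unfold gN; omega) u v (by rw [hi]; exact h1) (by rw [hi]; exact h2)).2
  rwa [hj] at this

theorem sol_dep {q m deps ext X} (hw : GWF m deps ext)
    (hX : Sol q (gM m deps) (gN m deps ext) (gInp m deps ext) (gDm m deps ext) X) {d : Dep}
    (hd : d ∈ deps) :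
    (∀ u v : Fin 4 → Fin q, (∀ i ∈ d.2.1, u (Fin.ofNat 4 i) = v (Fin.ofNat 4 i)) →
      (∀ i ∈ d.2.2, X i u = X i v) → X (3 * d.1 + 2) u = X (3 * d.1 + 2) v) ∧
    (∀ u v : Fin 4 → Fin q, u 2 = v 2 → X (3 * d.1 + 2) u = X (3 * d.1 + 2) v → u 0 = v 0) := by
  obtain ⟨k, hk, rfl⟩ := List.getElem_of_mem hd
  set d := deps[k] with hdk
  have hget : deps.getD k (0, [], []) = d := List.getD_eq_getElem _ _ hk
  have hdm := hw.h d hd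
  -- the three constraints
  have c1 : ∀ u v : Fin 4 → Fin q, u 3 = v 3 → X (3 * d.1 + 2) u = X (3 * d.1 + 2) v →
      X (3 * m + k) u = X (3 * m + k) v := by
    intro u v e1 e2
    have hi : gInp m deps ext (3 * m + k) = ([3], [3 * d.1 + 2]) := by
      unfold gInp
      rw [if_neg (by omega), if_pos (by omega), Nat.add_sub_cancel_left, hget]
    refine (hX (3 * m + k) (by unfold gN; omega) u v ?_ ?_).1 (by unfold gM; omega)
    · rw [hi]
      simp only [List.mem_singleton]
      rintro i rfl
      exact e1
    · rw [hi]
      simp only [List.mem_singleton]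
      rintro i rfl
      exact e2
  have c2 : ∀ u v : Fin 4 → Fin q, (∀ i ∈ d.2.1, u (Fin.ofNat 4 i) = v (Fin.ofNat 4 i)) →
      (∀ i ∈ d.2.2, X i u = X i v) → X (3 * m + k) u = X (3 * m + k) v → u 3 = v 3 := by
    intro u v e1 e2 e3
    set t := 3 * m + deps.length + k with ht
    have hi : gInp m deps ext t = (d.2.1, (3 * m + k) :: d.2.2) := by
      unfold gInp
      rw [if_neg (by omega), if_neg (by omega), if_pos (by omega),
        show t - (3 * m + deps.length) = k by omega, hget,
        show t - deps.length = 3 * m + k by omega]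
    have hj : gDm m deps ext t = [3] := by
      unfold gDm
      rw [if_neg (by omega), if_pos (by omega)]
    have := (hX t (by unfold gN; omega) u v (by rw [hi]; exact e1) ?_).2
    · rw [hj] at this
      exact this 3 (by simp)
    · rw [hi]
      simp only [List.mem_cons]
      rintro i (rfl | hi)
      · exact e3
      · exact e2 i hi
  have c3 : ∀ u v : Fin 4 → Fin q, u 3 = v 3 → u 1 = v 1 → u 2 = v 2 →
      X (3 * m + k) u = X (3 * m + k) v → u 0 = v 0 := by
    intro u v e1 e2 e3 e4
    set t := 3 * m + deps.length + deps.length + k with ht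
    have hi : gInp m deps ext t = ([3, 1, 2], [3 * m + k]) := by
      unfold gInp
      rw [if_neg (by omega), if_neg (by omega), if_neg (by omega), if_pos (by omega),
        show t - deps.length - deps.length = 3 * m + k by omega]
    have hj : gDm m deps ext t = [0] := by
      unfold gDm
      rw [if_neg (by omega), if_neg (by omega), if_pos (by omega)]
    have := (hX t (by unfold gN; omega) u v ?_ ?_).2
    · rw [hj] at this
      exact this 0 (by simp)
    · rw [hi]
      simp only [List.mem_cons, List.not_mem_nil, or_false]
      rintro i (rfl | rfl | rfl)
      · exact e1
      · exact e2
      · exact e3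
    · rw [hi]
      simp only [List.mem_singleton]
      rintro i rfl
      exact e4
  -- signals below `3 * m` do not depend on message 3
  have sw : ∀ i < 3 * m, ∀ (u : Fin 4 → Fin q) (w), X i (Function.update u 3 w) = X i u := by
    intro i hi u w
    have hb := sol_basic hX (i := i / 3) (by omega) (Function.update u 3 w) u
    have : i % 3 = 0 ∨ i % 3 = 1 ∨ i % 3 = 2 := by omega
    rcases this with h | h | h
    · have e : i = 3 * (i / 3) := by omega
      rw [e]; exact hb.1 (by simp) (by simp)
    · have e : i = 3 * (i / 3) + 1 := by omega
      rw [e]; exact hb.2.1 (by simp) (by simp)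
    · have e : i = 3 * (i / 3) + 2 := by omega
      rw [e]; exact hb.2.2 (by simp) (by simp)
  have mw : ∀ i ∈ d.2.1, ∀ (u : Fin 4 → Fin q) (w),
      Function.update u 3 w (Fin.ofNat 4 i) = u (Fin.ofNat 4 i) := by
    intro i hi u w
    have := hw.msg d hd i hi
    apply Function.update_of_ne
    intro h
    have := congrArg Fin.val h
    simp at this
    omega
  have hz : ∀ u v : Fin 4 → Fin q, u 0 = v 0 → u 2 = v 2 → X (3 * d.1 + 2) u = X (3 * d.1 + 2) v :=
    fun u v => (sol_basic hX hdm u v).2.2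
  have part2 : ∀ u v : Fin 4 → Fin q, u 2 = v 2 →
      X (3 * d.1 + 2) u = X (3 * d.1 + 2) v → u 0 = v 0 := by
    intro u v e1 e2
    have := c3 u (Function.update u 0 (v 0)) (by simp) (by simp) (by simp)
      (c1 _ _ (by simp) (e2.trans (hz _ _ (by simp) (by simpa using e1.symm))))
    simpa using this
  refine ⟨?_, part2⟩
  intro u v e1 e2
  have inj : ∀ v : Fin 4 → Fin q, ∀ y, ∃ w, X (3 * m + k) (Function.update v 3 w) = y := by
    intro v
    apply Finite.injective_iff_surjective.1
    intro w w' h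
    have := c2 (Function.update v 3 w) (Function.update v 3 w') ?_ ?_ h
    · simpa using this
    · intro i hi
      rw [mw i hi, mw i hi]
    · intro i hi
      have := hw.sig d hd i hi
      rw [sw i this, sw i this]
  obtain ⟨w', hw'⟩ := inj v (X (3 * m + k) u)
  have hw3 : u 3 = w' := by
    have := c2 u (Function.update v 3 w') ?_ ?_ hw'.symm
    · simpa using this
    · intro i hi
      rw [mw i hi]; exact e1 i hi
    · intro i hi
      have := hw.sig d hd i hi
      rw [sw i this]; exact e2 i hi
  have zs : ∀ y, ∃ a1, X (3 * d.1 + 2) (Function.update (Function.update v 3 w') 0 a1) = y := by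
    apply Finite.injective_iff_surjective.1
    intro a a' h
    have := part2 _ _ (by simp) h
    simpa using this
  obtain ⟨a1, ha1⟩ := zs (X (3 * d.1 + 2) u)
  have := c1 (Function.update (Function.update v 3 w') 0 a1) u (by simp [hw3]) ha1
  have h3 := c3 _ _ (by simp) (by simp) (by simp) (this.trans hw'.symm)
  simp at h3
  rw [← ha1]
  exact hz _ _ (by simpa using h3) (by simp)

/-- Dependencies for compositions and zeros. -/
def mkDeps (comps : List (ℕ × ℕ × ℕ)) (zeros : List ℕ) : List Dep :=
  comps.map (fun c => (c.2.2, [], [3 * c.1, 3 * c.2.1 + 1])) ++ zeros.map (fun h => (h, [0], []))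

def mkExt (covers : List (List ℕ)) : List Dem :=
  (([0], [2]), [2]) :: covers.map (fun F => (([0], F.map (fun f => 3 * f)), [1]))

structure CWF (m : ℕ) (comps : List (ℕ × ℕ × ℕ)) (zeros : List ℕ) (covers : List (List ℕ)) : Prop where
  pos : 0 < m
  c : ∀ c ∈ comps, c.1 < m ∧ c.2.1 < m ∧ c.2.2 < m
  z : ∀ h ∈ zeros, h < m
  v : ∀ F ∈ covers, ∀ f ∈ F, f < m

theorem CWF.gwf {m comps zeros covers} (h : CWF m comps zeros covers) :
    GWF m (mkDeps comps zeros) (mkExt covers) := by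
  have hp := h.pos
  constructor
  · intro d hd
    simp only [mkDeps, List.mem_append, List.mem_map] at hd
    rcases hd with ⟨c, hc, rfl⟩ | ⟨z, hz, rfl⟩
    · exact (h.c c hc).2.2
    · exact h.z z hz
  · intro d hd i hi
    simp only [mkDeps, List.mem_append, List.mem_map] at hd
    rcases hd with ⟨c, hc, rfl⟩ | ⟨z, hz, rfl⟩
    · simp at hi
    · simp at hi; omega
  · intro d hd i hi
    simp only [mkDeps, List.mem_append, List.mem_map] at hd
    rcases hd with ⟨c, hc, rfl⟩ | ⟨z, hz, rfl⟩
    · have := h.c c hc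
      simp at hi; omega
    · simp at hi
  · intro d hd i hi
    simp only [mkExt, List.mem_cons, List.mem_map] at hd
    rcases hd with rfl | ⟨c, hc, rfl⟩
    · simp at hi; omega
    · simp at hi; omega
  · intro d hd i hi
    simp only [mkExt, List.mem_cons, List.mem_map] at hd
    rcases hd with rfl | ⟨c, hc, rfl⟩
    · simp at hi; omega
    · simp only [List.mem_map] at hi
      obtain ⟨f, hf, rfl⟩ := hi
      have := h.v c hc f hf
      omega
  · intro d hd i hi
    simp only [mkExt, List.mem_cons, List.mem_map] at hd
    rcases hd with rfl | ⟨c, hc, rfl⟩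
    · simp at hi; omega
    · simp at hi; omega

theorem sound {q m comps zeros covers X} (h : CWF m comps zeros covers)
    (hid : ∀ f < m, (f, 0, f) ∈ comps ∧ (0, f, f) ∈ comps) (hcov : [0] ∈ covers)
    (hX : Sol q (gM m (mkDeps comps zeros)) (gN m (mkDeps comps zeros) (mkExt covers))
      (gInp m (mkDeps comps zeros) (mkExt covers)) (gDm m (mkDeps comps zeros) (mkExt covers)) X)
    (o : Fin q) :
    ∃ E : ℕ → Fin q → Fin q, (∀ f < m, E f o = o) ∧ (∀ c, E 0 c = c) ∧
      (∀ f g h, (f, g, h) ∈ comps → ∀ c, E h c = E f (E g c)) ∧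
      (∀ h ∈ zeros, ∀ c, E h c = o) ∧
      (∀ F ∈ covers, ∀ c c', (∀ f ∈ F, E f c = E f c') → c = c') := by
  have hw := h.gwf
  have hp := h.pos
  have hcomp : ∀ f g k, (f, g, k) ∈ comps →
      ((k, [], [3 * f, 3 * g + 1]) : Dep) ∈ mkDeps comps zeros := by
    intro f g k hc
    simp only [mkDeps, List.mem_append, List.mem_map]
    exact Or.inl ⟨_, hc, rfl⟩
  let x : ℕ → Fin q → Fin q → Fin q := fun f a b => X (3 * f) ![a, b, a, a]
  let y : ℕ → Fin q → Fin q → Fin q := fun f b c => X (3 * f + 1) ![b, b, c, b]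
  let z : ℕ → Fin q → Fin q → Fin q := fun f a c => X (3 * f + 2) ![a, a, c, a]
  have ex : ∀ f < m, ∀ u : Fin 4 → Fin q, X (3 * f) u = x f (u 0) (u 1) :=
    fun f hf u => (sol_basic hX hf _ _).1 (by simp) (by simp)
  have ey : ∀ f < m, ∀ u : Fin 4 → Fin q, X (3 * f + 1) u = y f (u 1) (u 2) :=
    fun f hf u => (sol_basic hX hf _ _).2.1 (by simp) (by simp)
  have ez : ∀ f < m, ∀ u : Fin 4 → Fin q, X (3 * f + 2) u = z f (u 0) (u 2) :=
    fun f hf u => (sol_basic hX hf _ _).2.2 (by simp) (by simp)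
  have covx : ∀ F ∈ covers, ∀ a b b', (∀ f ∈ F, x f a b = x f a b') → b = b' := by
    intro F hF a b b' hff
    have := sol_ext hX (d := (([0], F.map (fun f => 3 * f)), [1]))
      (by simp only [mkExt, List.mem_cons, List.mem_map]; exact Or.inr ⟨F, hF, rfl⟩)
      ![a, b, a, a] ![a, b', a, a] (by simp) (by
        intro i hi
        simp only [List.mem_map] at hi
        obtain ⟨f, hf, rfl⟩ := hi
        exact hff f hf) 1 (by simp)
    exact this
  refine Exists.elim (gadget_algebra o m hp x y z
    (fun f g k => (f, g, k) ∈ comps) (fun k => k ∈ zeros) ?_ ?_ ?_ (fun f hf => (hid f hf).1)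
    (fun f hf => (hid f hf).2) ?_ ?_) ?_
  rotate_right
  · rintro E ⟨h1, h2, h3, h4, h5⟩
    refine ⟨E, h1, h2, ?_, ?_, ?_⟩
    · intro f g k hc
      obtain ⟨a, b, c⟩ := h.c _ hc
      exact h3 f g k a b c hc
    · intro k hk
      exact h4 k (h.z k hk) hk
    · intro F hF
      exact h5 F (h.v F hF) (covx F hF)
  · intro f g k hc a b c a' b' c' e1 e2
    obtain ⟨hf, hg, hk⟩ := h.c _ hc
    have := (sol_dep hw hX (hcomp f g k hc)).1 ![a, b, c, a] ![a', b', c', a'] (by simp) (by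
      simp only [List.mem_cons, List.not_mem_nil, or_false]
      rintro i (rfl | rfl)
      · rw [ex f hf, ex f hf]; simpa using e1
      · rw [ey g hg, ey g hg]; simpa using e2)
    rw [ez k hk, ez k hk] at this
    simpa using this
  · intro k hk a c c'
    have hkm := h.z k hk
    have := (sol_dep hw hX (d := (k, [0], [])) (by
      simp only [mkDeps, List.mem_append, List.mem_map]
      exact Or.inr ⟨_, hk, rfl⟩)).1 ![a, a, c, a] ![a, a, c', a] (by simp) (by simp)
    rw [ez k hkm, ez k hkm] at this
    simpa using this
  · intro f hf a a' c hz
    have := (sol_dep hw hX (hcomp f 0 f (hid f hf).1)).2 ![a, a, c, a] ![a', a', c, a'] (by simp) hz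
    simpa using this
  · intro a c c' hz
    have := sol_ext hX (d := (([0], [2]), [2])) (by simp [mkExt])
      ![a, a, c, a] ![a, a, c', a] (by simp) (by
        simp only [List.mem_singleton]
        rintro i rfl
        exact hz) 2 (by simp)
    simpa using this
  · intro a b b' hb
    exact covx [0] hcov a b b' (by simpa using hb)

theorem complete {q m comps zeros covers} {V : Type} [AddCommGroup V] (ε : Fin q ≃ V)
    (h2 : ∀ v : V, v + v = 0) (E : ℕ → V →+ V) (h0 : ∀ v, E 0 v = v)
    (hw : CWF m comps zeros covers)
    (hc : ∀ f g k, (f, g, k) ∈ comps → ∀ v, E k v = E f (E g v))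
    (hz : ∀ k ∈ zeros, ∀ v, E k v = 0)
    (hv : ∀ F ∈ covers, ∀ v v', (∀ f ∈ F, E f v = E f v') → v = v') :
    ∃ X, Sol q (gM m (mkDeps comps zeros)) (gN m (mkDeps comps zeros) (mkExt covers))
      (gInp m (mkDeps comps zeros) (mkExt covers)) (gDm m (mkDeps comps zeros) (mkExt covers)) X := by
  have hp := hw.pos
  set deps := mkDeps comps zeros with hdeps
  let Y : ℕ → (Fin 4 → Fin q) → V := fun t u =>
    if t < 3 * m then
      (if t % 3 = 0 then ε (u 0) + E (t / 3) (ε (u 1)) else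
        if t % 3 = 1 then ε (u 1) + E (t / 3) (ε (u 2)) else ε (u 0) + E (t / 3) (ε (u 2)))
    else ε (u 3) + (ε (u 0) + E (deps.getD (t - 3 * m) (0, [], [])).1 (ε (u 2)))
  have Yx : ∀ f < m, ∀ u, Y (3 * f) u = ε (u 0) + E f (ε (u 1)) := by
    intro f hf u
    simp only [Y]
    rw [if_pos (by omega), if_pos (by omega), show 3 * f / 3 = f by omega]
  have Yy : ∀ f < m, ∀ u, Y (3 * f + 1) u = ε (u 1) + E f (ε (u 2)) := by
    intro f hf u
    simp only [Y]
    rw [if_pos (by omega), if_neg (by omega), if_pos (by omega), show (3 * f + 1) / 3 = f by omega]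
  have Yz : ∀ f < m, ∀ u, Y (3 * f + 2) u = ε (u 0) + E f (ε (u 2)) := by
    intro f hf u
    simp only [Y]
    rw [if_pos (by omega), if_neg (by omega), if_neg (by omega), show (3 * f + 2) / 3 = f by omega]
  have Yv : ∀ k u, Y (3 * m + k) u =
      ε (u 3) + (ε (u 0) + E (deps.getD k (0, [], [])).1 (ε (u 2))) := by
    intro k u
    simp only [Y]
    rw [if_neg (by omega), Nat.add_sub_cancel_left]
  refine ⟨fun t u => ε.symm (Y t u), ?_⟩
  intro t ht u v hm hs
  have hs' : ∀ i ∈ (gInp m deps (mkExt covers) t).2, Y i u = Y i v :=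
    fun i hi => ε.symm.injective (hs i hi)
  simp only [EmbeddingLike.apply_eq_iff_eq]
  unfold gM
  unfold gN at ht
  unfold gDm
  unfold gInp at hm hs'
  split_ifs at hm hs' with c1 c2 c3 c4 c5 c6
  · refine ⟨fun _ => ?_, by rw [if_pos (by omega)]; simp⟩
    have e0 : u 0 = v 0 := hm 0 (by simp)
    have e1 : u 1 = v 1 := hm 1 (by simp)
    simp only [Y, if_pos c1, if_pos c2]
    rw [e0, e1]
  · refine ⟨fun _ => ?_, by rw [if_pos (by omega)]; simp⟩
    have e0 : u 1 = v 1 := hm 1 (by simp)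
    have e1 : u 2 = v 2 := hm 2 (by simp)
    simp only [Y, if_pos c1, if_neg c2, if_pos c3]
    rw [e0, e1]
  · refine ⟨fun _ => ?_, by rw [if_pos (by omega)]; simp⟩
    have e0 : u 0 = v 0 := hm 0 (by simp)
    have e1 : u 2 = v 2 := hm 2 (by simp)
    simp only [Y, if_pos c1, if_neg c2, if_neg c3]
    rw [e0, e1]
  · refine ⟨fun _ => ?_, by rw [if_pos (by omega)]; simp⟩
    have e0 : u 3 = v 3 := hm 3 (by simp)
    have e1 := hs' _ (List.mem_singleton.2 rfl)
    have hd := hw.gwf.h _ (getD_mem' (l := deps) (k := t - 3 * m) (by omega) (0, [], []))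
    rw [Yz _ hd, Yz _ hd] at e1
    obtain ⟨k, rfl⟩ : ∃ k, t = 3 * m + k := ⟨t - 3 * m, by omega⟩
    rw [Nat.add_sub_cancel_left] at e1
    rw [Yv, Yv, e0, e1]
  · refine ⟨fun h => by omega, ?_⟩
    rw [if_neg (by omega), if_pos (by omega)]
    simp only [List.mem_singleton]
    rintro i rfl
    obtain ⟨k, rfl⟩ : ∃ k, t = 3 * m + deps.length + k := ⟨t - (3 * m + deps.length), by omega⟩
    rw [Nat.add_sub_cancel_left] at hm hs'
    have e1 := hs' (3 * m + k) (by simp; left; omega)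
    rw [Yv, Yv] at e1
    have hd := getD_mem' (l := deps) (k := k) (by omega) (0, [], [])
    set d := deps.getD k (0, [], []) with hdd
    have e2 : ε (u 0) + E d.1 (ε (u 2)) = ε (v 0) + E d.1 (ε (v 2)) := by
      have hd' := hd
      rw [hdeps] at hd'
      simp only [mkDeps, List.mem_append, List.mem_map] at hd'
      rcases hd' with ⟨⟨f, g, k'⟩, hcc, hd'⟩ | ⟨z, hzz, hd'⟩
      · rw [← hd'] at hs' ⊢
        obtain ⟨hf, hg, hk⟩ := hw.c _ hcc
        simp only at hf hg hk hs' ⊢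
        have a1 := hs' (3 * f) (by simp)
        have a2 := hs' (3 * g + 1) (by simp)
        rw [Yx f hf, Yx f hf] at a1
        rw [Yy g hg, Yy g hg] at a2
        have e : ∀ w : Fin 4 → Fin q, ε (w 0) + E k' (ε (w 2)) =
            (ε (w 0) + E f (ε (w 1))) + E f (ε (w 1) + E g (ε (w 2))) := by
          intro w
          rw [hc f g k' hcc, map_add]
          have := h2 (E f (ε (w 1)))
          rw [add_assoc, ← add_assoc (E f (ε (w 1))), this, zero_add]
        rw [e u, e v, a1, a2]
      · rw [← hd'] at hm ⊢
        have e0 : u 0 = v 0 := hm 0 (by simp)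
        simp only
        rw [hz z hzz, hz z hzz, e0]
    rw [e2] at e1
    exact ε.injective (add_right_cancel e1)
  · refine ⟨fun h => by omega, ?_⟩
    rw [if_neg (by omega), if_neg (by omega), if_pos (by omega)]
    simp only [List.mem_singleton]
    rintro i rfl
    obtain ⟨k, hk⟩ : ∃ k, t - deps.length - deps.length = 3 * m + k :=
      ⟨t - deps.length - deps.length - 3 * m, by omega⟩
    rw [hk] at hs'
    have e1 := hs' _ (List.mem_singleton.2 rfl)
    have e2 : u 3 = v 3 := hm 3 (by simp)
    have e3 : u 2 = v 2 := hm 2 (by simp)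
    rw [Yv, Yv, e2, e3] at e1
    exact ε.injective (add_right_cancel (add_left_cancel e1))
  · refine ⟨fun h => by omega, ?_⟩
    rw [if_neg (by omega), if_neg (by omega), if_neg (by omega)]
    have hd := getD_mem' (l := mkExt covers)
      (k := t - (3 * m + deps.length + deps.length + deps.length)) (by omega) (([], []), [])
    set d := (mkExt covers).getD (t - (3 * m + deps.length + deps.length + deps.length)) (([], []), []) with hdd
    simp only [mkExt, List.mem_cons, List.mem_map] at hd
    rcases hd with hd | ⟨F, hF, hd⟩
    · rw [hd] at hm hs' ⊢
      have e1 := hs' 2 (by simp)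
      have e2 : u 0 = v 0 := hm 0 (by simp)
      have := Yz 0 hp
      simp only [Nat.mul_zero, Nat.zero_add] at this
      rw [this, this, e2, h0, h0] at e1
      simp only [List.mem_singleton]
      rintro i rfl
      exact ε.injective (add_left_cancel e1)
    · rw [← hd] at hm hs' ⊢
      simp only [List.mem_singleton]
      rintro i rfl
      have e2 : u 0 = v 0 := hm 0 (by simp)
      apply ε.injective
      apply hv F hF
      intro f hf
      have e1 := hs' (3 * f) (by simp only [List.mem_map]; exact ⟨f, hf, rfl⟩)
      rw [Yx f (hw.v F hF f hf), Yx f (hw.v F hF f hf), e2] at e1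
      exact add_left_cancel e1

end NC


/-! ### Words, relations, soundness -/

namespace NC

open Function

/-- Letters of the operator words. -/
inductive Letter : Type
  | y | s | h | fin | w | J | T | e | f | P | Q | Q2
  | a : ℕ → Letter
  | z : ℕ → Letter
  | pr : Prog → Letter

abbrev Word : Type := List Letter

/-- Composite of the operators of a word. -/
def act {A : Type} (ρ : Letter → A → A) : Word → A → A
  | [], c => c
  | x :: u, c => ρ x (act ρ u c)

theorem act_append {A : Type} (ρ : Letter → A → A) (u v : Word) (c : A) :
    act ρ (u ++ v) c = act ρ u (act ρ v c) := by
  induction u with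
  | nil => rfl
  | cons x u ih => simp [act, ih]

def subs : Prog → List Prog
  | .skip => [.skip]
  | .inc i => [.inc i]
  | .seq p q => .seq p q :: (subs p ++ subs q)
  | .loop i p => .loop i p :: subs p

theorem self_mem_subs (p : Prog) : p ∈ subs p := by cases p <;> simp [subs]

theorem subs_trans {p q r : Prog} (h : p ∈ subs q) (h' : q ∈ subs r) : p ∈ subs r := by
  induction r with
  | skip => simp only [subs, List.mem_singleton] at h'; subst h'; exact h
  | inc i => simp only [subs, List.mem_singleton] at h'; subst h'; exact h
  | seq a b iha ihb =>
    simp only [subs, List.mem_cons, List.mem_append] at h' ⊢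
    rcases h' with rfl | h' | h'
    · simpa only [subs, List.mem_cons, List.mem_append] using h
    · exact Or.inr (Or.inl (iha h'))
    · exact Or.inr (Or.inr (ihb h'))
  | loop i a iha =>
    simp only [subs, List.mem_cons] at h' ⊢
    rcases h' with rfl | h'
    · simpa only [subs, List.mem_cons] using h
    · exact Or.inr (iha h')

theorem bdd_subs {m : ℕ} {p q : Prog} (h : p ∈ subs q) (hq : q.Bdd m) : p.Bdd m := by
  induction q with
  | skip => simp only [subs, List.mem_singleton] at h; subst h; exact hq
  | inc i => simp only [subs, List.mem_singleton] at h; subst h; exact hq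
  | seq a b iha ihb =>
    simp only [subs, List.mem_cons, List.mem_append] at h
    rcases h with rfl | h | h
    · exact hq
    · exact iha h hq.1
    · exact ihb h hq.2
  | loop i a iha =>
    simp only [subs, List.mem_cons] at h
    rcases h with rfl | h
    · exact hq
    · exact iha h hq.2

def progRel : Prog → List (Word × Word)
  | .skip => [([.h, .pr .skip], [.y, .h])]
  | .inc i => [([.h, .pr (.inc i)], [.y, .a i, .h])]
  | .seq p q => [([.h, .pr (.seq p q)], [.y, .h, .pr p, .pr q])]
  | .loop i p => [([.a i, .h, .pr (.loop i p)], [.y, .h, .pr p, .pr (.loop i p)]),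
      ([.z i, .h, .pr (.loop i p)], [.y, .z i, .h])]

def coreRel : List (Word × Word) :=
  [([.e, .J], [.J, .f]), ([.f, .J], [.J, .e]), ([.P, .T, .J], [.P, .J, .J, .T])]

def regRel1 (i : ℕ) : List (Word × Word) :=
  [([.s, .z i], [.s]), ([.y, .a i], [.a i, .y]), ([.y, .z i], [.z i, .y])]

def regRel2 (i j : ℕ) : List (Word × Word) :=
  if i = j then [] else [([.a i, .a j], [.a j, .a i]), ([.z i, .a j], [.a j, .z i])]

def rels (main : Prog) (m : ℕ) : List (Word × Word) :=
  (subs main).flatMap progRel ++ coreRel ++ (List.range m).flatMap regRel1 ++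
    (List.range m).flatMap (fun i => (List.range m).flatMap (regRel2 i))

def zerosW : List Word := [[.a 1, .h, .fin], [.e, .f]]

def coversW : List (List Word) :=
  [[[]], [[.J]], [[.T]], [[.e], [.f]], [[.P], [.w, .Q], [.w, .Q2]]]

def Wn (main : Prog) (n : ℕ) : Word := .s :: (List.replicate n (.a 0) ++ [.h, .pr main, .fin])

structure Rep (main : Prog) (m n : ℕ) {A : Type} (o : A) (ρ : Letter → A → A) : Prop where
  fix : ∀ x, ρ x o = o
  rel : ∀ p ∈ rels main m, ∀ c, act ρ p.1 c = act ρ p.2 c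
  zero : ∀ u ∈ zerosW, ∀ c, act ρ u c = o
  wd : ∀ c, ρ .w c = act ρ (Wn main n) c
  cov : ∀ F ∈ coversW, ∀ c c', (∀ u ∈ F, act ρ u c = act ρ u c') → c = c'

section sim
variable {G : Type} [Monoid G] (α : ℕ → G)

def regs (m : ℕ) (σ : ℕ → ℕ) : G := ((List.range m).map fun i => α i ^ σ i).prod

theorem regs_succ (m : ℕ) (σ : ℕ → ℕ) : regs α (m + 1) σ = regs α m σ * α m ^ σ m := by
  simp [regs, List.range_succ]

theorem regs_congr {m : ℕ} {σ τ : ℕ → ℕ} (h : ∀ i < m, σ i = τ i) : regs α m σ = regs α m τ := by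
  induction m with
  | zero => rfl
  | succ m ih => rw [regs_succ, regs_succ, ih (fun i hi => h i (by omega)), h m (by omega)]

theorem regs_inc {m i : ℕ} (hi : i < m) (hc : ∀ i < m, ∀ j < m, α i * α j = α j * α i)
    (σ : ℕ → ℕ) : regs α m (update σ i (σ i + 1)) = regs α m σ * α i := by
  induction m with
  | zero => omega
  | succ m ih =>
    rw [regs_succ, regs_succ]
    by_cases him : i = m
    · subst him
      rw [update_self, pow_succ, ← mul_assoc]
      congr 2
      exact regs_congr α fun j hj => update_of_ne (by omega) _ _
    · rw [ih (by omega) (fun i hi j hj => hc i (by omega) j (by omega)),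
        update_of_ne (Ne.symm him), mul_assoc, mul_assoc]
      congr 1
      exact (Commute.pow_right (hc i (by omega) m (by omega)) _).eq

theorem regs_comm {m : ℕ} (g : G) (σ : ℕ → ℕ) (h : ∀ i < m, σ i = 0 ∨ g * α i = α i * g) :
    g * regs α m σ = regs α m σ * g := by
  induction m with
  | zero => simp [regs]
  | succ m ih =>
    rw [regs_succ, ← mul_assoc, ih (fun i hi => h i (by omega)), mul_assoc, mul_assoc]
    congr 1
    rcases h m (by omega) with h | h
    · rw [h]; simp
    · exact (Commute.pow_right h _).eq

end sim

theorem simulate {G : Type} [Monoid G] (ρ : Letter → G) (main : Prog) (m : ℕ) (hb : main.Bdd m)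
    (hr : ∀ p ∈ rels main m, (p.1.map ρ).prod = (p.2.map ρ).prod)
    {p σ t σ'} (hrun : Run p σ t σ') (hp : p ∈ subs main) (k : ℕ) :
    ρ .s * ρ .y ^ k * regs (fun i => ρ (.a i)) m σ * ρ .h * ρ (.pr p) =
      ρ .s * ρ .y ^ (k + t) * regs (fun i => ρ (.a i)) m σ' * ρ .h := by
  have hprog : ∀ q ∈ subs main, ∀ x ∈ progRel q, (x.1.map ρ).prod = (x.2.map ρ).prod := by
    intro q hq x hx
    apply hr
    simp only [rels, List.mem_append, List.mem_flatMap]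
    exact Or.inl (Or.inl (Or.inl ⟨q, hq, hx⟩))
  have hreg1 : ∀ i < m, ∀ x ∈ regRel1 i, (x.1.map ρ).prod = (x.2.map ρ).prod := by
    intro i hi x hx
    apply hr
    simp only [rels, List.mem_append, List.mem_flatMap]
    exact Or.inl (Or.inr ⟨i, by simpa using hi, hx⟩)
  have hreg2 : ∀ i < m, ∀ j < m, ∀ x ∈ regRel2 i j, (x.1.map ρ).prod = (x.2.map ρ).prod := by
    intro i hi j hj x hx
    apply hr
    simp only [rels, List.mem_append, List.mem_flatMap]
    exact Or.inr ⟨i, by simpa using hi, j, by simpa using hj, hx⟩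
  have sz : ∀ i < m, ρ .s * ρ (.z i) = ρ .s := by
    intro i hi
    simpa using hreg1 i hi ([.s, .z i], [.s]) (by simp [regRel1])
  have ya : ∀ i < m, ρ .y * ρ (.a i) = ρ (.a i) * ρ .y := by
    intro i hi
    simpa using hreg1 i hi ([.y, .a i], [.a i, .y]) (by simp [regRel1])
  have yz : ∀ i < m, ρ .y * ρ (.z i) = ρ (.z i) * ρ .y := by
    intro i hi
    simpa using hreg1 i hi ([.y, .z i], [.z i, .y]) (by simp [regRel1])
  have aa : ∀ i < m, ∀ j < m, ρ (.a i) * ρ (.a j) = ρ (.a j) * ρ (.a i) := by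
    intro i hi j hj
    by_cases h : i = j
    · rw [h]
    · simpa using hreg2 i hi j hj ([.a i, .a j], [.a j, .a i]) (by simp [regRel2, h])
  have za : ∀ i < m, ∀ j < m, i ≠ j → ρ (.z i) * ρ (.a j) = ρ (.a j) * ρ (.z i) := by
    intro i hi j hj h
    simpa using hreg2 i hi j hj ([.z i, .a j], [.a j, .z i]) (by simp [regRel2, h])
  have yA : ∀ σ, ρ .y * regs (fun i => ρ (.a i)) m σ = regs (fun i => ρ (.a i)) m σ * ρ .y :=
    fun σ => regs_comm _ _ _ fun i hi => Or.inr (ya i hi)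
  have yA' : ∀ k σ, ρ .s * ρ .y ^ k * regs (fun i => ρ (.a i)) m σ * ρ .y =
      ρ .s * ρ .y ^ (k + 1) * regs (fun i => ρ (.a i)) m σ := by
    intro k σ
    rw [mul_assoc _ (regs _ _ _) (ρ .y), ← yA, ← mul_assoc, pow_succ, ← mul_assoc (ρ .s)]
  have zA : ∀ k σ, ∀ i < m, σ i = 0 →
      ρ .s * ρ .y ^ k * regs (fun i => ρ (.a i)) m σ * ρ (.z i) =
      ρ .s * ρ .y ^ k * regs (fun i => ρ (.a i)) m σ := by
    intro k σ i hi h0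
    rw [mul_assoc _ (regs _ _ _) (ρ (.z i)), ← regs_comm, ← mul_assoc, mul_assoc (ρ .s),
      ← (Commute.pow_right (yz i hi).symm k).eq, ← mul_assoc, sz i hi]
    intro j hj
    by_cases h : i = j
    · left; rw [← h]; exact h0
    · exact Or.inr (za i hi j hj h)
  induction hrun generalizing k with
  | skip σ =>
    have := hprog _ hp ([.h, .pr .skip], [.y, .h]) (by simp [progRel])
    simp only [List.map_cons, List.map_nil, List.prod_cons, List.prod_nil, mul_one] at this
    rw [mul_assoc _ (ρ .h), this, ← mul_assoc, yA']
  | inc i σ =>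
    have := hprog _ hp ([.h, .pr (.inc i)], [.y, .a i, .h]) (by simp [progRel])
    simp only [List.map_cons, List.map_nil, List.prod_cons, List.prod_nil, mul_one] at this
    have hi : i < m := bdd_subs hp hb
    rw [mul_assoc _ (ρ .h), this, ← mul_assoc, ← mul_assoc, yA', regs_inc _ hi aa]
    simp only [mul_assoc]
  | @seq p q σ t τ t' υ h1 h2 ih1 ih2 =>
    have := hprog _ hp ([.h, .pr (.seq p q)], [.y, .h, .pr p, .pr q]) (by simp [progRel])
    simp only [List.map_cons, List.map_nil, List.prod_cons, List.prod_nil, mul_one] at this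
    have hp1 : p ∈ subs main := subs_trans (by simp [subs, self_mem_subs]) hp
    have hp2 : q ∈ subs main := subs_trans (by simp [subs, self_mem_subs]) hp
    rw [mul_assoc _ (ρ .h), this, ← mul_assoc, ← mul_assoc, ← mul_assoc, yA', ih1 hp1, ih2 hp2]
    congr 4
    omega
  | @loop0 i p σ h0 =>
    have := hprog _ hp ([.z i, .h, .pr (.loop i p)], [.y, .z i, .h]) (by simp [progRel])
    simp only [List.map_cons, List.map_nil, List.prod_cons, List.prod_nil, mul_one] at this
    have hi : i < m := (bdd_subs hp hb).1
    rw [← zA k σ i hi h0, mul_assoc _ (ρ .h), mul_assoc _ (ρ (.z i)), this, ← mul_assoc,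
      ← mul_assoc, yA', zA _ σ i hi h0]
  | @loopS i p σ n t τ t' υ h0 h1 h2 ih1 ih2 =>
    have := hprog _ hp ([.a i, .h, .pr (.loop i p)], [.y, .h, .pr p, .pr (.loop i p)])
      (by simp [progRel])
    simp only [List.map_cons, List.map_nil, List.prod_cons, List.prod_nil, mul_one] at this
    have hi : i < m := (bdd_subs hp hb).1
    have hp1 : p ∈ subs main := subs_trans (by simp [subs, self_mem_subs]) hp
    have hσ : σ = update (update σ i n) i (update σ i n i + 1) := by
      simp [← h0]
    rw [hσ, regs_inc _ hi aa, ← mul_assoc, mul_assoc _ (ρ .h), mul_assoc _ (ρ (.a i)), this,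
      ← mul_assoc, ← mul_assoc, ← mul_assoc, yA', ih1 hp1, ih2 hp]
    congr 4
    omega

theorem rep_sound {main : Prog} {m n : ℕ} {A : Type} [Finite A] {o : A} {ρ : Letter → A → A}
    (hr : Rep main m n o ρ) (hb : main.Bdd m) (hm : 2 ≤ m) {t σ'}
    (hrun : Run main (update (fun _ => 0) 0 n) t σ') (h1 : σ' 1 ≠ 0) (c : A) : c = o := by
  let ρ' : Letter → Function.End A := ρ
  have hact : ∀ u c, act ρ u c = ((u.map ρ').prod : Function.End A) c := by
    intro u
    induction u with
    | nil => intro c; rfl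
    | cons x u ih => intro c; simp only [act, ih]; rfl
  have hfix : ∀ u, act ρ u o = o := by
    intro u
    induction u with
    | nil => rfl
    | cons x u ih => simp only [act, ih, hr.fix]
  have hrel : ∀ p ∈ rels main m, (p.1.map ρ').prod = (p.2.map ρ').prod := by
    intro p hp
    funext c
    rw [← hact, ← hact, hr.rel p hp]
  have hsim := simulate ρ' main m hb hrel hrun (self_mem_subs main) 0
  have aa : ∀ i < m, ∀ j < m, ρ' (.a i) * ρ' (.a j) = ρ' (.a j) * ρ' (.a i) := by
    intro i hi j hj
    by_cases h : i = j
    · rw [h]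
    · have := hrel ([.a i, .a j], [.a j, .a i]) (by
        simp only [rels, List.mem_append, List.mem_flatMap]
        exact Or.inr ⟨i, by simpa using hi, j, by simpa using hj, by simp [regRel2, h]⟩)
      simpa using this
  have hA0 : ∀ n, regs (fun i => ρ' (.a i)) m (update (fun _ => 0) 0 n) = ρ' (.a 0) ^ n := by
    intro n
    induction n with
    | zero =>
      rw [update_eq_self_iff.2 rfl, pow_zero]
      simp [regs]
    | succ n ih =>
      rw [pow_succ, ← ih, ← regs_inc (fun i => ρ' (.a i)) (by omega) aa]
      simp
  -- the word `w` acts as the constant map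
  have hw : ∀ c, ρ .w c = o := by
    intro c
    rw [hr.wd, hact]
    have e1 : ((Wn main n).map ρ').prod = ρ' .s * ρ' .y ^ 0 *
        regs (fun i => ρ' (.a i)) m (update (fun _ => 0) 0 n) * ρ' .h * ρ' (.pr main) * ρ' .fin := by
      rw [hA0]
      simp [Wn, mul_assoc]
    obtain ⟨k, hk⟩ := Nat.exists_eq_succ_of_ne_zero h1
    have e2 : σ' = update (update σ' 1 k) 1 (update σ' 1 k 1 + 1) := by
      simp only [update_self, update_idem]
      rw [← Nat.succ_eq_add_one, ← hk, update_eq_self]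
    rw [e1, hsim, e2, regs_inc _ (by omega) aa]
    have e3 := hr.zero [.a 1, .h, .fin] (by simp [zerosW]) c
    have e4 : ∀ g : Function.End A, (g * ρ' (.a 1) * ρ' .h * ρ' .fin) c = g o := by
      intro g
      rw [← e3]; rfl
    rw [← mul_assoc, e4]
    have f1 : ∀ x, ρ' x o = o := hr.fix
    have f2 : ∀ g g' : Function.End A, g o = o → g' o = o → (g * g') o = o := by
      intro g g' h h'
      change g (g' o) = o
      rw [h', h]
    have f3 : ∀ (g : Function.End A) k, g o = o → (g ^ k) o = o := by
      intro g k h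
      induction k with
      | zero => rfl
      | succ k ih => rw [pow_succ]; exact f2 _ _ ih h
    refine f2 _ _ (f2 _ _ (f1 _) (f3 _ _ (f1 _))) ?_
    unfold regs
    have : ∀ l : List ℕ, ((l.map fun i => ρ' (.a i) ^ update σ' 1 k i).prod) o = o := by
      intro l
      induction l with
      | nil => rfl
      | cons i l ih => rw [List.map_cons, List.prod_cons]; exact f2 _ _ (f3 _ _ (f1 _)) ih
    exact this _
  have core : ∀ x ∈ coreRel, ∀ c, act ρ x.1 c = act ρ x.2 c := by
    intro x hx
    apply hr.rel
    simp only [rels, List.mem_append]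
    exact Or.inl (Or.inl (Or.inr hx))
  have Pinj : Injective (ρ .P) := by
    intro c c' h
    refine hr.cov [[.P], [.w, .Q], [.w, .Q2]] (by simp [coversW]) c c' ?_
    simp only [List.mem_cons, List.not_mem_nil, or_false]
    rintro u (rfl | rfl | rfl)
    · exact h
    · simp [act, hw]
    · simp [act, hw]
  have Jinj : Injective (ρ .J) := fun c c' h =>
    hr.cov [[.J]] (by simp [coversW]) c c' (by simpa [act] using h)
  have Tinj : Injective (ρ .T) := fun c c' h =>
    hr.cov [[.T]] (by simp [coversW]) c c' (by simpa [act] using h)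
  have tj : ∀ c, ρ .T (ρ .J c) = ρ .J (ρ .J (ρ .T c)) := fun c =>
    Pinj (core ([.P, .T, .J], [.P, .J, .J, .T]) (by simp [coreRel]) c)
  have ej : ∀ c, ρ .e (ρ .J c) = ρ .J (ρ .f c) :=
    core ([.e, .J], [.J, .f]) (by simp [coreRel])
  have fj : ∀ c, ρ .f (ρ .J c) = ρ .J (ρ .e c) :=
    core ([.f, .J], [.J, .e]) (by simp [coreRel])
  let Jp : Equiv.Perm A := Equiv.ofBijective _ (Finite.injective_iff_bijective.1 Jinj)
  let Tp : Equiv.Perm A := Equiv.ofBijective _ (Finite.injective_iff_bijective.1 Tinj)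
  have hconj : SemiconjBy Tp Jp (Jp ^ 2) := by
    ext c
    exact tj c
  have hord : orderOf Jp = orderOf (Jp ^ 2) := hconj.orderOf_eq _
  have hodd : Odd (orderOf Jp) := by
    have hpos : 0 < orderOf Jp := orderOf_pos Jp
    by_contra heven
    rw [Nat.not_odd_iff_even] at heven
    obtain ⟨k, hk⟩ := heven
    have : (Jp ^ 2) ^ k = 1 := by
      rw [← pow_mul, show 2 * k = orderOf Jp by omega, pow_orderOf_eq_one]
    have := orderOf_le_of_pow_eq_one (by omega) this
    omega
  have ejk : ∀ k c, ρ .e ((ρ .J)^[2 * k] c) = (ρ .J)^[2 * k] (ρ .e c) := by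
    intro k
    induction k with
    | zero => intro c; rfl
    | succ k ih =>
      intro c
      rw [show 2 * (k + 1) = 2 * k + 1 + 1 by ring, iterate_succ, iterate_succ, comp, comp, comp, comp, ih, ej,
        fj]
  obtain ⟨k, hk⟩ := hodd
  have hJN : ∀ c, (ρ .J)^[2 * k + 1] c = c := by
    intro c
    have := congrArg (fun g : Equiv.Perm A => g c) (pow_orderOf_eq_one Jp)
    rw [hk] at this
    simp only [Equiv.Perm.coe_one, id] at this
    rw [← Equiv.Perm.iterate_eq_pow] at this
    exact this
  have hef : ∀ c, ρ .e c = ρ .f c := by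
    intro c
    have := ejk k (ρ .J c)
    rw [ej, ← comp_apply (f := (ρ .J)^[2 * k]), ← comp_apply (f := (ρ .J)^[2 * k]),
      ← iterate_succ, hJN, hJN] at this
    exact this
  have einj : Injective (ρ .e) := by
    intro c c' h
    refine hr.cov [[.e], [.f]] (by simp [coversW]) c c' ?_
    simp only [List.mem_cons, List.not_mem_nil, or_false]
    rintro u (rfl | rfl)
    · exact h
    · simpa [act, ← hef] using h
  have hee : ∀ c, ρ .e (ρ .e c) = o := by
    intro c
    have := hr.zero [.e, .f] (by simp [zerosW]) c
    simpa [act, ← hef] using this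
  exact einj (einj ((hee c).trans (hee o).symm))

end NC


/-! ### A finite model for programs that halt with output zero -/

namespace NC

open Function

/-- The relation described by a word, read from left to right. -/
def RW {B : Type} (St : Letter → B → B → Prop) : B → Word → B → Prop
  | b, [], b' => b = b'
  | b, x :: u, b' => ∃ c, St x b c ∧ RW St c u b'

theorem RW_append {B : Type} (St : Letter → B → B → Prop) (u v : Word) (b b' : B) :
    RW St b (u ++ v) b' ↔ ∃ c, RW St b u c ∧ RW St c v b' := by
  induction u generalizing b with
  | nil => simp [RW]
  | cons x u ih =>
    simp only [List.cons_append, RW, ih]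
    constructor
    · rintro ⟨c, h, c', h', h''⟩; exact ⟨c', ⟨c, h, h'⟩, h''⟩
    · rintro ⟨c', ⟨c, h, h'⟩, hlast⟩; exact ⟨c, h, c', h', hlast⟩

/-- Raw machine states: clock, registers, mode. -/
abbrev RS : Type := ℕ × (ℕ → ℕ) × Bool

def Stp : Letter → RS → RS → Prop
  | .y, b, c => b.2.2 = false ∧ c = (b.1 + 1, b.2.1, false)
  | .s, b, c => b.2.2 = false ∧ (∀ i, b.2.1 i = 0) ∧ c = b
  | .a i, b, c => b.2.2 = false ∧ c = (b.1, update b.2.1 i (b.2.1 i + 1), false)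
  | .z i, b, c => b.2.2 = false ∧ b.2.1 i = 0 ∧ c = b
  | .h, b, c => b.2.2 = false ∧ c = (b.1, b.2.1, true)
  | .pr p, b, c => b.2.2 = true ∧ ∃ t σ', Run p b.2.1 t σ' ∧ c = (b.1 + t, σ', true)
  | .fin, b, c => b.2.2 = true ∧ b.2.1 1 = 0 ∧ c = b
  | _, _, _ => False

theorem Stp_fun {x : Letter} {b c c' : RS} (h : Stp x b c) (h' : Stp x b c') : c = c' := by
  cases x <;> simp only [Stp] at h h'
  case pr p =>
    obtain ⟨_, t, σ, hr, rfl⟩ := h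
    obtain ⟨_, t', σ', hr', rfl⟩ := h'
    obtain ⟨rfl, rfl⟩ := hr.det hr'
    rfl
  all_goals grind

def Mach (m : ℕ) : Letter → Prop
  | .y => True
  | .s => True
  | .h => True
  | .fin => True
  | .a i => i < m
  | .z i => i < m
  | .pr p => p.Bdd m
  | _ => False

def sm (m : ℕ) (σ : ℕ → ℕ) : ℕ := ∑ i ∈ Finset.range m, σ i

theorem sm_update {m i : ℕ} (hi : i < m) (σ : ℕ → ℕ) (v : ℕ) :
    sm m (update σ i v) + σ i = sm m σ + v := by
  unfold sm
  have hi' : i ∈ Finset.range m := by simpa using hi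
  rw [Finset.sum_update_of_mem hi', ← Finset.add_sum_erase _ _ hi', Finset.sdiff_singleton_eq_erase]
  omega

theorem run_sm {m : ℕ} {p σ t σ'} (h : Run p σ t σ') (hp : p.Bdd m) :
    sm m σ ≤ t + sm m σ' ∧ ∀ i, m ≤ i → σ' i = σ i := by
  induction h with
  | skip σ => exact ⟨by omega, fun i hi => rfl⟩
  | inc i σ =>
    have hi : i < m := hp
    have := sm_update hi σ (σ i + 1)
    exact ⟨by omega, fun j hj => update_of_ne (by omega) _ _⟩
  | seq h1 h2 ih1 ih2 =>
    have a := ih1 hp.1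
    have b := ih2 hp.2
    exact ⟨by omega, fun i hi => (b.2 i hi).trans (a.2 i hi)⟩
  | loop0 h0 => exact ⟨by omega, fun i hi => rfl⟩
  | @loopS i p σ n t τ t' υ h0 h1 h2 ih1 ih2 =>
    have a := ih1 hp.2
    have b := ih2 hp
    have hi : i < m := hp.1
    have := sm_update hi σ n
    refine ⟨by omega, fun j hj => ?_⟩
    rw [b.2 j hj, a.2 j hj, update_of_ne (by omega)]

def mu (m : ℕ) (b : RS) : ℕ := b.1 + sm m b.2.1

def Sup (m : ℕ) (b : RS) : Prop := ∀ i, m ≤ i → b.2.1 i = 0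

def Good (m L : ℕ) (b : RS) : Prop := Sup m b ∧ mu m b ≤ L

theorem Stp_mono {m : ℕ} {x : Letter} (hx : Mach m x) {b c : RS} (h : Stp x b c) (hb : Sup m b) :
    Sup m c ∧ mu m b ≤ mu m c := by
  cases x <;> simp only [Mach] at hx <;> simp only [Stp] at h
  case pr p =>
    obtain ⟨_, t, σ, hr, rfl⟩ := h
    obtain ⟨h1, h2⟩ := run_sm hr hx
    refine ⟨fun i hi => (h2 i hi).trans (hb i hi), ?_⟩
    simp only [mu]
    omega
  case a i =>
    obtain ⟨_, rfl⟩ := h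
    have := sm_update hx b.2.1 (b.2.1 i + 1)
    refine ⟨fun j hj => ?_, ?_⟩
    · change update _ _ _ j = 0
      rw [update_of_ne (by omega)]
      exact hb j hj
    · simp only [mu]
      omega
  case y =>
    obtain ⟨_, rfl⟩ := h
    exact ⟨hb, by simp only [mu]; omega⟩
  case h =>
    obtain ⟨_, rfl⟩ := h
    exact ⟨hb, by simp only [mu]; omega⟩
  case s => obtain ⟨_, _, rfl⟩ := h; exact ⟨hb, le_rfl⟩
  case z => obtain ⟨_, _, rfl⟩ := h; exact ⟨hb, le_rfl⟩
  case fin => obtain ⟨_, _, rfl⟩ := h; exact ⟨hb, le_rfl⟩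

theorem RW_mono {m : ℕ} {u : Word} (hu : ∀ x ∈ u, Mach m x) {b c : RS} (h : RW Stp b u c)
    (hb : Sup m b) : Sup m c ∧ mu m b ≤ mu m c := by
  induction u generalizing b with
  | nil => cases h; exact ⟨hb, le_rfl⟩
  | cons x u ih =>
    obtain ⟨d, h1, h2⟩ := h
    have a := Stp_mono (hu x (by simp)) h1 hb
    have b := ih (fun x hx => hu x (by simp [hx])) h2 a.1
    exact ⟨b.1, a.2.trans b.2⟩

theorem good_finite (m L : ℕ) : {b : RS | Good m L b}.Finite := by
  let F : RS → Fin (L + 1) × (Fin m → Fin (L + 1)) × Bool := fun b =>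
    (Fin.ofNat _ b.1, fun i => Fin.ofNat _ (b.2.1 i), b.2.2)
  refine Set.Finite.of_finite_image (f := F) (Set.toFinite _) ?_
  have hle : ∀ b, Good m L b → b.1 ≤ L ∧ ∀ i < m, b.2.1 i ≤ L := by
    intro b hb
    have h2 := hb.2
    unfold mu at h2
    refine ⟨by omega, fun i hi => ?_⟩
    have : b.2.1 i ≤ sm m b.2.1 :=
      Finset.single_le_sum (f := b.2.1) (fun _ _ => Nat.zero_le _) (by simpa using hi)
    omega
  intro b hb c hc hbc
  have hb1 := hle b hb
  have hc1 := hle c hc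
  simp only [F, Prod.mk.injEq] at hbc
  obtain ⟨h1, h2, h3⟩ := hbc
  have e : ∀ x y, x ≤ L → y ≤ L → Fin.ofNat (L + 1) x = Fin.ofNat (L + 1) y → x = y := by
    intro x y hx hy h
    have := congrArg Fin.val h
    simp only [Fin.val_ofNat] at this
    rwa [Nat.mod_eq_of_lt (by omega), Nat.mod_eq_of_lt (by omega)] at this
  refine Prod.ext (e _ _ hb1.1 hc1.1 h1) (Prod.ext ?_ h3)
  funext i
  by_cases hi : i < m
  · exact e _ _ (hb1.2 i hi) (hc1.2 i hi) (congrFun h2 ⟨i, hi⟩)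
  · rw [hb.1 i (by omega), hc.1 i (by omega)]

/-- Raw validity of the machine relations. -/
def RelOK (m : ℕ) (r : Word × Word) : Prop :=
  r.1 ≠ [] ∧ r.2 ≠ [] ∧ (∀ x ∈ r.1, Mach m x) ∧ (∀ x ∈ r.2, Mach m x) ∧
    ∀ b b', RW Stp b r.1 b' ↔ RW Stp b r.2 b'

theorem regRel1_ok {m i : ℕ} (hi : i < m) : ∀ r ∈ regRel1 i, RelOK m r := by
  intro r hr
  simp only [regRel1, List.mem_cons, List.not_mem_nil, or_false] at hr
  rcases hr with rfl | rfl | rfl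
  · refine ⟨by simp, by simp, by simp [Mach, hi], by simp [Mach], ?_⟩
    rintro b b'
    constructor
    · rintro ⟨_, ⟨h1, h2, rfl⟩, _, ⟨_, _, rfl⟩, rfl⟩
      exact ⟨_, ⟨h1, h2, rfl⟩, rfl⟩
    · rintro ⟨_, ⟨h1, h2, rfl⟩, rfl⟩
      exact ⟨_, ⟨h1, h2, rfl⟩, _, ⟨h1, h2 i, rfl⟩, rfl⟩
  · refine ⟨by simp, by simp, by simp [Mach, hi], by simp [Mach, hi], ?_⟩
    rintro b b'
    constructor
    · rintro ⟨_, ⟨h1, rfl⟩, _, ⟨_, rfl⟩, rfl⟩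
      exact ⟨_, ⟨h1, rfl⟩, _, ⟨rfl, rfl⟩, rfl⟩
    · rintro ⟨_, ⟨h1, rfl⟩, _, ⟨_, rfl⟩, rfl⟩
      exact ⟨_, ⟨h1, rfl⟩, _, ⟨rfl, rfl⟩, rfl⟩
  · refine ⟨by simp, by simp, by simp [Mach, hi], by simp [Mach, hi], ?_⟩
    rintro b b'
    constructor
    · rintro ⟨_, ⟨h1, rfl⟩, _, ⟨_, h2, rfl⟩, rfl⟩
      exact ⟨_, ⟨h1, h2, rfl⟩, _, ⟨h1, rfl⟩, rfl⟩
    · rintro ⟨_, ⟨h1, h2, rfl⟩, _, ⟨_, rfl⟩, rfl⟩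
      exact ⟨_, ⟨h1, rfl⟩, _, ⟨rfl, h2, rfl⟩, rfl⟩

theorem regRel2_ok {m i j : ℕ} (hi : i < m) (hj : j < m) : ∀ r ∈ regRel2 i j, RelOK m r := by
  intro r hr
  unfold regRel2 at hr
  split_ifs at hr with hij
  · simp at hr
  simp only [List.mem_cons, List.not_mem_nil, or_false] at hr
  rcases hr with rfl | rfl
  · refine ⟨by simp, by simp, by simp [Mach, hi, hj], by simp [Mach, hi, hj], ?_⟩
    rintro ⟨k, σ, c⟩ b'
    simp only [RW, Stp]
    have h1 : update (update σ i (σ i + 1)) j (update σ i (σ i + 1) j + 1) =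
        update (update σ j (σ j + 1)) i (update σ j (σ j + 1) i + 1) := by
      rw [update_of_ne (Ne.symm hij), update_of_ne hij, update_comm hij]
    constructor
    · rintro ⟨_, ⟨h, rfl⟩, _, ⟨_, rfl⟩, rfl⟩
      exact ⟨_, ⟨h, rfl⟩, _, ⟨rfl, rfl⟩, by simp only [h1]⟩
    · rintro ⟨_, ⟨h, rfl⟩, _, ⟨_, rfl⟩, rfl⟩
      exact ⟨_, ⟨h, rfl⟩, _, ⟨rfl, rfl⟩, by simp only [h1]⟩
  · refine ⟨by simp, by simp, by simp [Mach, hi, hj], by simp [Mach, hi, hj], ?_⟩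
    rintro ⟨k, σ, c⟩ b'
    simp only [RW, Stp]
    have h1 : update σ j (σ j + 1) i = σ i := update_of_ne hij _ _
    constructor
    · rintro ⟨_, ⟨h, h2, rfl⟩, _, ⟨_, rfl⟩, rfl⟩
      exact ⟨_, ⟨h, rfl⟩, _, ⟨rfl, h1.trans h2, rfl⟩, rfl⟩
    · rintro ⟨_, ⟨h, rfl⟩, _, ⟨_, h2, rfl⟩, rfl⟩
      exact ⟨_, ⟨h, h1.symm.trans h2, rfl⟩, _, ⟨h, rfl⟩, rfl⟩

theorem progRel_ok {m : ℕ} {p : Prog} (hp : p.Bdd m) : ∀ r ∈ progRel p, RelOK m r := by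
  intro r hr
  cases p with
  | skip =>
    simp only [progRel, List.mem_cons, List.not_mem_nil, or_false] at hr
    subst hr
    refine ⟨by simp, by simp, by simp [Mach, Prog.Bdd], by simp [Mach], ?_⟩
    rintro ⟨k, σ, c⟩ b'
    simp only [RW, Stp]
    constructor
    · rintro ⟨_, ⟨h, rfl⟩, _, ⟨_, t, σ', hr, rfl⟩, rfl⟩
      cases hr
      exact ⟨_, ⟨h, rfl⟩, _, ⟨rfl, rfl⟩, rfl⟩
    · rintro ⟨_, ⟨h, rfl⟩, _, ⟨_, rfl⟩, rfl⟩
      exact ⟨_, ⟨h, rfl⟩, _, ⟨rfl, _, _, Run.skip _, rfl⟩, rfl⟩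
  | inc i =>
    simp only [progRel, List.mem_cons, List.not_mem_nil, or_false] at hr
    subst hr
    have hi : i < m := hp
    refine ⟨by simp, by simp, by simp [Mach, Prog.Bdd, hi], by simp [Mach, hi], ?_⟩
    rintro ⟨k, σ, c⟩ b'
    simp only [RW, Stp]
    constructor
    · rintro ⟨_, ⟨h, rfl⟩, _, ⟨_, t, σ', hr, rfl⟩, rfl⟩
      cases hr
      exact ⟨_, ⟨h, rfl⟩, _, ⟨rfl, rfl⟩, _, ⟨rfl, rfl⟩, rfl⟩
    · rintro ⟨_, ⟨h, rfl⟩, _, ⟨_, rfl⟩, _, ⟨_, rfl⟩, rfl⟩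
      exact ⟨_, ⟨h, rfl⟩, _, ⟨rfl, _, _, Run.inc _ _, rfl⟩, rfl⟩
  | seq p q =>
    simp only [progRel, List.mem_cons, List.not_mem_nil, or_false] at hr
    subst hr
    have h1 : p.Bdd m := hp.1
    have h2 : q.Bdd m := hp.2
    refine ⟨by simp, by simp, by simp [Mach, Prog.Bdd, h1, h2], by simp [Mach, h1, h2], ?_⟩
    rintro ⟨k, σ, c⟩ b'
    simp only [RW, Stp]
    constructor
    · rintro ⟨_, ⟨h, rfl⟩, _, ⟨_, t, σ', hr, rfl⟩, rfl⟩
      cases hr with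
      | seq ha hb =>
        refine ⟨_, ⟨h, rfl⟩, _, ⟨rfl, rfl⟩, _, ⟨rfl, _, _, ha, rfl⟩, _, ⟨rfl, _, _, hb, rfl⟩, ?_⟩
        simp only [Prod.mk.injEq, and_true]
        omega
    · rintro ⟨_, ⟨h, rfl⟩, _, ⟨_, rfl⟩, _, ⟨_, t, σ1, ha, rfl⟩, _, ⟨_, t', σ2, hb, rfl⟩, rfl⟩
      refine ⟨_, ⟨h, rfl⟩, _, ⟨rfl, _, _, Run.seq ha hb, rfl⟩, ?_⟩
      simp only [Prod.mk.injEq, and_true]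
      omega
  | loop i p =>
    have h1 : i < m := hp.1
    have h2 : p.Bdd m := hp.2
    simp only [progRel, List.mem_cons, List.not_mem_nil, or_false] at hr
    rcases hr with rfl | rfl
    · refine ⟨by simp, by simp, by simp [Mach, Prog.Bdd, h1, h2],
        by simp [Mach, Prog.Bdd, h1, h2], ?_⟩
      rintro ⟨k, σ, c⟩ b'
      simp only [RW, Stp]
      constructor
      · rintro ⟨_, ⟨h, rfl⟩, _, ⟨_, rfl⟩, _, ⟨_, t, σ', hr, rfl⟩, rfl⟩
        cases hr with
        | loop0 h0 => simp at h0
        | loopS h0 ha hb =>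
          simp only [update_self] at h0
          obtain rfl := Nat.succ.inj h0
          rw [update_idem, update_eq_self] at ha
          refine ⟨_, ⟨h, rfl⟩, _, ⟨rfl, rfl⟩, _, ⟨rfl, _, _, ha, rfl⟩, _,
            ⟨rfl, _, _, hb, rfl⟩, ?_⟩
          simp only [Prod.mk.injEq, and_true]
          omega
      · rintro ⟨_, ⟨h, rfl⟩, _, ⟨_, rfl⟩, _, ⟨_, t, σ1, ha, rfl⟩, _, ⟨_, t', σ2, hb, rfl⟩, rfl⟩
        refine ⟨_, ⟨h, rfl⟩, _, ⟨rfl, rfl⟩, _, ⟨rfl, _, _, Run.loopS (n := σ i)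
          (by simp) (by rw [update_idem, update_eq_self]; exact ha) hb, rfl⟩, ?_⟩
        simp only [Prod.mk.injEq, and_true]
        omega
    · refine ⟨by simp, by simp, by simp [Mach, Prog.Bdd, h1, h2],
        by simp [Mach, h1], ?_⟩
      rintro ⟨k, σ, c⟩ b'
      simp only [RW, Stp]
      constructor
      · rintro ⟨_, ⟨h, hz, rfl⟩, _, ⟨_, rfl⟩, _, ⟨_, t, σ', hr, rfl⟩, rfl⟩
        cases hr with
        | loop0 h0 => exact ⟨_, ⟨h, rfl⟩, _, ⟨rfl, hz, rfl⟩, _, ⟨rfl, rfl⟩, rfl⟩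
        | loopS h0 ha hb => simp only at hz h0; omega
      · rintro ⟨_, ⟨h, rfl⟩, _, ⟨_, hz, rfl⟩, _, ⟨_, rfl⟩, rfl⟩
        exact ⟨_, ⟨h, hz, rfl⟩, _, ⟨h, rfl⟩, _, ⟨rfl, _, _, Run.loop0 hz, rfl⟩, rfl⟩

/-- The truncated machine relation. -/
def MS {D : ℕ} (m L : ℕ) (emb : RS → Fin D) (x : Letter) (s s' : Fin D) : Prop :=
  ∃ b b', Good m L b ∧ Good m L b' ∧ emb b = s ∧ emb b' = s' ∧ Stp x b b'

theorem RW_MS {D m L : ℕ} {emb : RS → Fin D} (hemb : Set.InjOn emb {b | Good m L b})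
    (x : Letter) (u : Word) (hu : ∀ x' ∈ x :: u, Mach m x') (s s' : Fin D) :
    RW (MS m L emb) s (x :: u) s' ↔
      ∃ b b', Good m L b ∧ Good m L b' ∧ emb b = s ∧ emb b' = s' ∧ RW Stp b (x :: u) b' := by
  induction u generalizing x s with
  | nil => simp [RW, MS]
  | cons x' u ih =>
    rw [RW]
    constructor
    · rintro ⟨c, ⟨b, b1, hb, hb1, rfl, rfl, h⟩, h'⟩
      rw [ih x' (fun y hy => hu y (List.mem_cons_of_mem _ hy))] at h'
      obtain ⟨b2, b', hb2, hb', e1, rfl, h2⟩ := h'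
      obtain rfl := hemb hb2 hb1 e1
      exact ⟨b, b', hb, hb', rfl, rfl, b2, h, h2⟩
    · rintro ⟨b, b', hb, hb', rfl, rfl, b1, h, h2⟩
      have a := Stp_mono (hu x (by simp)) h hb.1
      have a2 := RW_mono (fun y hy => hu y (List.mem_cons_of_mem _ hy)) h2 a.1
      have hb1 : Good m L b1 := ⟨a.1, a2.2.trans hb'.2⟩
      refine ⟨emb b1, ⟨b, b1, hb, hb1, rfl, rfl, h⟩, ?_⟩
      rw [ih x' (fun y hy => hu y (List.mem_cons_of_mem _ hy))]
      exact ⟨b1, b', hb1, hb', rfl, rfl, h2⟩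

/-- The step relation of the finite model. -/
def StM {d : ℕ} (m L : ℕ) (emb : RS → Fin (2 * d)) (W : Word) (fs : Fin (2 * d)) :
    Letter → Fin (2 * d) → Fin (2 * d) → Prop
  | .J, s, s' => s'.val = if s.val + 1 = 2 * d then 0 else s.val + 1
  | .T, s, s' => s'.val = if s.val % 2 = 0 then s.val / 2 else d + s.val / 2
  | .P, s, s' => s'.val = if s.val < 2 * d - 2 then s.val else 0
  | .e, s, s' => s.val % 2 = 0 ∧ s' = s
  | .f, s, s' => s.val % 2 = 1 ∧ s' = s
  | .Q, s, s' => s = fs ∧ s'.val = 2 * d - 1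
  | .Q2, s, s' => s = fs ∧ s'.val = 2 * d - 2
  | .w, s, s' => RW (MS m L emb) s W s'
  | x, s, s' => MS m L emb x s s'

theorem RW_fun {B : Type} {St : Letter → B → B → Prop}
    (hf : ∀ x b c c', St x b c → St x b c' → c = c') (u : Word) :
    ∀ b c c', RW St b u c → RW St b u c' → c = c' := by
  induction u with
  | nil => intro b c c' h h'; exact h.symm.trans h'
  | cons x u ih =>
    rintro b c c' ⟨d, h1, h2⟩ ⟨d', h1', h2'⟩
    obtain rfl := hf _ _ _ _ h1 h1'
    exact ih _ _ _ h2 h2'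

theorem MS_fun {D m L : ℕ} {emb : RS → Fin D} (hemb : Set.InjOn emb {b | Good m L b}) :
    ∀ x b c c', MS m L emb x b c → MS m L emb x b c' → c = c' := by
  rintro x _ _ _ ⟨b, b', hb, hb', rfl, rfl, h⟩ ⟨b1, b1', hb1, hb1', e, rfl, h'⟩
  obtain rfl := hemb hb1 hb e
  rw [Stp_fun h h']

theorem StM_fun {d m L : ℕ} {emb : RS → Fin (2 * d)} (hemb : Set.InjOn emb {b | Good m L b})
    (W : Word) (fs : Fin (2 * d)) :
    ∀ x b c c', StM m L emb W fs x b c → StM m L emb W fs x b c' → c = c' := by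
  intro x b c c' h h'
  cases x <;> simp only [StM] at h h'
  case w => exact RW_fun (MS_fun hemb) _ _ _ _ h h'
  case J => exact Fin.ext (h.trans h'.symm)
  case T => exact Fin.ext (h.trans h'.symm)
  case P => exact Fin.ext (h.trans h'.symm)
  case e => exact h.2.trans h'.2.symm
  case f => exact h.2.trans h'.2.symm
  case Q => exact Fin.ext (h.2.trans h'.2.symm)
  case Q2 => exact Fin.ext (h.2.trans h'.2.symm)
  all_goals exact MS_fun hemb _ _ _ _ h h'

theorem StM_mach {d m L : ℕ} {emb : RS → Fin (2 * d)}
    (W : Word) (fs : Fin (2 * d)) (u : Word) (hu : ∀ x ∈ u, Mach m x) (s s') :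
    RW (StM m L emb W fs) s u s' ↔ RW (MS m L emb) s u s' := by
  induction u generalizing s with
  | nil => rfl
  | cons x u ih =>
    have hx : ∀ s s', StM m L emb W fs x s s' ↔ MS m L emb x s s' := by
      intro s s'
      have := hu x (by simp)
      cases x <;> simp only [Mach] at this <;> rfl
    simp only [RW, hx, ih (fun y hy => hu y (List.mem_cons_of_mem _ hy))]

/-- Linear operator attached to a partial function. -/
def lop {B : Type} (R : B → B → Prop) : (B → ZMod 2) →+ (B → ZMod 2) where
  toFun φ s := if h : ∃ s', R s s' then φ h.choose else 0
  map_zero' := by funext s; simp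
  map_add' φ ψ := by
    funext s
    by_cases h : ∃ s', R s s' <;> simp [h]

theorem act_lop {B : Type} {St : Letter → B → B → Prop}
    (hf : ∀ x b c c', St x b c → St x b c' → c = c') (u : Word) (φ : B → ZMod 2) (s : B) :
    (∀ s', RW St s u s' → act (fun x => (lop (St x) : (B → ZMod 2) → (B → ZMod 2))) u φ s = φ s') ∧
    ((∀ s', ¬ RW St s u s') →
      act (fun x => (lop (St x) : (B → ZMod 2) → (B → ZMod 2))) u φ s = 0) := by
  induction u generalizing s with
  | nil =>
    refine ⟨?_, ?_⟩
    · rintro _ rfl; rfl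
    · intro h; exact absurd rfl (h s)
  | cons x u ih =>
    simp only [act]
    by_cases h : ∃ s', St x s s'
    · have e : ∀ ψ, lop (St x) ψ s = ψ h.choose := by
        intro ψ
        simp [lop, h]
      rw [e]
      constructor
      · rintro s' ⟨c, h1, h2⟩
        have := hf _ _ _ _ h.choose_spec h1
        rw [this]
        exact (ih c).1 s' h2
      · intro hn
        exact (ih _).2 fun s' hs => hn s' ⟨_, h.choose_spec, hs⟩
    · have e : ∀ ψ, lop (St x) ψ s = 0 := by
        intro ψ
        simp [lop, h]
      rw [e]
      exact ⟨fun s' ⟨c, h1, _⟩ => absurd ⟨c, h1⟩ h, fun _ => rfl⟩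

theorem core_ok {d m L : ℕ} (hd : 2 ≤ d) {emb : RS → Fin (2 * d)} (W : Word) (fs : Fin (2 * d)) :
    ∀ r ∈ coreRel, ∀ s s', RW (StM m L emb W fs) s r.1 s' ↔ RW (StM m L emb W fs) s r.2 s' := by
  intro r hr
  have hJ : ∀ s : Fin (2 * d), ∃ s', StM m L emb W fs .J s s' := fun s =>
    ⟨⟨if s.val + 1 = 2 * d then 0 else s.val + 1, by have := s.2; split_ifs <;> omega⟩, rfl⟩
  have hT : ∀ s : Fin (2 * d), ∃ s', StM m L emb W fs .T s s' := fun s =>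
    ⟨⟨if s.val % 2 = 0 then s.val / 2 else d + s.val / 2,
      by have := s.2; split_ifs <;> omega⟩, rfl⟩
  have hP : ∀ s : Fin (2 * d), ∃ s', StM m L emb W fs .P s s' := fun s =>
    ⟨⟨if s.val < 2 * d - 2 then s.val else 0, by have := s.2; split_ifs <;> omega⟩, rfl⟩
  simp only [coreRel, List.mem_cons, List.not_mem_nil, or_false] at hr
  rcases hr with rfl | rfl | rfl
  · intro s s'
    simp only [RW]
    constructor
    · rintro ⟨c, ⟨h1, rfl⟩, c', h2, rfl⟩
      refine ⟨_, h2, _, ⟨?_, rfl⟩, rfl⟩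
      have h2' : c'.val = _ := h2
      rw [h2']
      split_ifs <;> omega
    · rintro ⟨c, h1, c', ⟨h2, rfl⟩, rfl⟩
      refine ⟨_, ⟨?_, rfl⟩, _, h1, rfl⟩
      have h1' : c'.val = _ := h1
      rw [h1'] at h2
      split_ifs at h2 <;> omega
  · intro s s'
    simp only [RW]
    constructor
    · rintro ⟨c, ⟨h1, rfl⟩, c', h2, rfl⟩
      refine ⟨_, h2, _, ⟨?_, rfl⟩, rfl⟩
      have h2' : c'.val = _ := h2
      rw [h2']
      split_ifs <;> omega
    · rintro ⟨c, h1, c', ⟨h2, rfl⟩, rfl⟩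
      refine ⟨_, ⟨?_, rfl⟩, _, h1, rfl⟩
      have h1' : c'.val = _ := h1
      rw [h1'] at h2
      split_ifs at h2 <;> omega
  · intro s s'
    simp only [RW]
    constructor
    · rintro ⟨c1, h1, c2, h2, c3, h3, rfl⟩
      obtain ⟨x2, g2⟩ := hJ c1
      obtain ⟨x3, g3⟩ := hJ x2
      obtain ⟨x4, g4⟩ := hT x3
      refine ⟨_, h1, _, g2, _, g3, _, g4, ?_⟩
      apply Fin.ext
      simp only [StM] at h1 h2 h3 g2 g3 g4
      have := s.2
      grind
    · rintro ⟨c1, h1, x2, g2, x3, g3, x4, g4, rfl⟩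
      obtain ⟨c2, h2⟩ := hT c1
      obtain ⟨c3, h3⟩ := hJ c2
      refine ⟨_, h1, _, h2, _, h3, ?_⟩
      apply Fin.ext
      simp only [StM] at h1 h2 h3 g2 g3 g4
      have := s.2
      grind

theorem exists_model {main : Prog} {m n t : ℕ} {σ' : ℕ → ℕ} (hb : main.Bdd m) (hm : 2 ≤ m)
    (hrun : Run main (update (fun _ => 0) 0 n) t σ') (h1 : σ' 1 = 0) :
    ∃ (D : ℕ) (ρ : Letter → ((Fin D → ZMod 2) →+ (Fin D → ZMod 2))), 0 < D ∧
      Rep main m n (0 : Fin D → ZMod 2) (fun x => (ρ x : (Fin D → ZMod 2) → (Fin D → ZMod 2))) := by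
  let start : RS := (0, fun _ => 0, false)
  let fs : RS := (t, σ', true)
  let L := mu m fs
  have hfin := good_finite m L
  -- an injection of the good states
  obtain ⟨d, hd, emb, hemb⟩ : ∃ d, 2 ≤ d ∧ ∃ emb : RS → Fin (2 * d),
      Set.InjOn emb {b | Good m L b} := by
    have := hfin.to_subtype
    obtain ⟨k, ⟨eq⟩⟩ := Finite.exists_equiv_fin {b : RS | Good m L b}
    refine ⟨k + 2, by omega, fun b => if h : Good m L b then
      ⟨(eq ⟨b, h⟩).val, by have := (eq ⟨b, h⟩).2; omega⟩ else ⟨0, by omega⟩, ?_⟩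
    intro b hb c hc h
    have hb' : Good m L b := hb
    have hc' : Good m L c := hc
    simp only [hb', hc', dif_pos, Fin.mk.injEq] at h
    have := eq.injective (Fin.ext h)
    simpa using this
  have hWm : ∀ x ∈ Wn main n, Mach m x := by
    intro x hx
    simp only [Wn, List.mem_cons, List.mem_append, List.mem_replicate, List.not_mem_nil,
      or_false] at hx
    rcases hx with rfl | ⟨_, rfl⟩ | rfl | rfl | rfl
    · trivial
    · change 0 < m; omega
    · trivial
    · exact hb
    · trivial
  have hWrun : RW Stp start (Wn main n) fs := by
    refine ⟨start, ⟨rfl, fun _ => rfl, rfl⟩, ?_⟩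
    rw [RW_append]
    refine ⟨(0, update (fun _ => 0) 0 n, false), ?_, ?_⟩
    · have : ∀ n k, RW Stp (0, update (fun _ => 0) 0 k, false) (List.replicate n (.a 0))
          (0, update (fun _ => 0) 0 (k + n), false) := by
        intro n
        induction n with
        | zero => intro k; rfl
        | succ n ih =>
          intro k
          refine ⟨_, ⟨rfl, rfl⟩, ?_⟩
          have := ih (k + 1)
          simp only [update_self, update_idem]
          rw [show k + (n + 1) = k + 1 + n by omega]
          exact this
      have := this n 0
      rw [zero_add] at this
      convert this using 3
      exact (update_eq_self_iff.2 rfl).symm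
    · exact ⟨_, ⟨rfl, rfl⟩, (0 + t, σ', true), ⟨rfl, _, _, hrun, rfl⟩, _, ⟨rfl, h1, rfl⟩,
        by simp [fs, RW]⟩
  have hs0 : Sup m start := fun _ _ => rfl
  have hmono := RW_mono hWm hWrun hs0
  have gs : Good m L start := ⟨hs0, hmono.2⟩
  have gf : Good m L fs := ⟨hmono.1, le_rfl⟩
  let St := StM m L emb (Wn main n) (emb fs)
  have hf : ∀ x b c c', St x b c → St x b c' → c = c' := StM_fun hemb _ _
  have hact := act_lop hf
  refine ⟨2 * d, fun x => lop (St x), by omega, ?_⟩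
  -- equality of operators from equality of relations
  have heq : ∀ u v : Word, (∀ s s', RW St s u s' ↔ RW St s v s') → ∀ φ,
      act (fun x => (lop (St x) : (Fin (2 * d) → ZMod 2) → (Fin (2 * d) → ZMod 2))) u φ =
      act (fun x => (lop (St x) : (Fin (2 * d) → ZMod 2) → (Fin (2 * d) → ZMod 2))) v φ := by
    intro u v huv φ
    funext s
    by_cases h : ∃ s', RW St s u s'
    · obtain ⟨s', h⟩ := h
      rw [(hact u φ s).1 s' h, (hact v φ s).1 s' ((huv _ _).1 h)]
    · rw [not_exists] at h
      rw [(hact u φ s).2 h, (hact v φ s).2 (fun s' hs => h s' ((huv _ _).2 hs))]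
  have hzero : ∀ u : Word, (∀ s s', ¬ RW St s u s') → ∀ φ,
      act (fun x => (lop (St x) : (Fin (2 * d) → ZMod 2) → (Fin (2 * d) → ZMod 2))) u φ = 0 := by
    intro u hu φ
    funext s
    exact (hact u φ s).2 (hu s)
  have hcov : ∀ F : List Word, (∀ s', ∃ u ∈ F, ∃ s, RW St s u s') → ∀ φ ψ,
      (∀ u ∈ F,
        act (fun x => (lop (St x) : (Fin (2 * d) → ZMod 2) → (Fin (2 * d) → ZMod 2))) u φ =
        act (fun x => (lop (St x) : (Fin (2 * d) → ZMod 2) → (Fin (2 * d) → ZMod 2))) u ψ) →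
      φ = ψ := by
    intro F hF φ ψ h
    funext s'
    obtain ⟨u, hu, s, hs⟩ := hF s'
    rw [← (hact u φ s).1 s' hs, ← (hact u ψ s).1 s' hs, h u hu]
  have hmach : ∀ r, RelOK m r → ∀ s s', RW St s r.1 s' ↔ RW St s r.2 s' := by
    rintro ⟨u, v⟩ ⟨hu, hv, mu, mv, h⟩ s s'
    rw [StM_mach _ _ _ mu, StM_mach _ _ _ mv]
    obtain ⟨x, u, rfl⟩ := List.exists_cons_of_ne_nil hu
    obtain ⟨y, v, rfl⟩ := List.exists_cons_of_ne_nil hv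
    simp only at mu mv h ⊢
    rw [RW_MS hemb _ _ mu, RW_MS hemb _ _ mv]
    simp only [h]
  constructor
  · intro x; exact map_zero _
  · intro r hr φ
    apply heq
    simp only [rels, List.mem_append, List.mem_flatMap, List.mem_range] at hr
    rcases hr with ((⟨p, hp, hr⟩ | hr) | ⟨i, hi, hr⟩) | ⟨i, hi, j, hj, hr⟩
    · exact hmach _ (progRel_ok (bdd_subs hp hb) r hr)
    · exact core_ok hd _ _ r hr
    · exact hmach _ (regRel1_ok hi r hr)
    · exact hmach _ (regRel2_ok hi hj r hr)
  · intro u hu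
    apply hzero
    intro s s'
    simp only [zerosW, List.mem_cons, List.not_mem_nil, or_false] at hu
    rcases hu with rfl | rfl
    · have hmm : ∀ x ∈ [Letter.a 1, .h, .fin], Mach m x := by
        simp [Mach]; omega
      rw [StM_mach _ _ _ hmm, RW_MS hemb _ _ hmm]
      rintro ⟨b, b', _, _, _, _, h⟩
      simp only [RW, Stp] at h
      obtain ⟨_, ⟨_, rfl⟩, _, ⟨_, rfl⟩, _, ⟨_, h, _⟩, _⟩ := h
      simp at h
    · rintro ⟨c, ⟨h1, rfl⟩, c', ⟨h2, _⟩, _⟩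
      omega
  · intro φ
    have := heq [.w] (Wn main n) (fun s s' => by
      rw [StM_mach _ _ _ hWm]
      constructor
      · rintro ⟨_, h, rfl⟩; exact h
      · intro h; exact ⟨_, h, rfl⟩) φ
    exact this
  · intro F hF
    apply hcov
    intro s'
    have hs' := s'.2
    simp only [coversW, List.mem_cons, List.not_mem_nil, or_false] at hF
    rcases hF with rfl | rfl | rfl | rfl | rfl
    · exact ⟨[], by simp, s', rfl⟩
    · refine ⟨[.J], by simp, ⟨if s'.val = 0 then 2 * d - 1 else s'.val - 1, by
        split_ifs <;> omega⟩, s', ?_, rfl⟩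
      change s'.val = ite _ _ _
      simp only
      split_ifs <;> omega
    · refine ⟨[.T], by simp, ⟨if s'.val < d then 2 * s'.val else 2 * (s'.val - d) + 1, by
        split_ifs <;> omega⟩, s', ?_, rfl⟩
      change s'.val = ite _ _ _
      simp only
      split_ifs <;> omega
    · by_cases h : s'.val % 2 = 0
      · exact ⟨[.e], by simp, s', s', ⟨h, rfl⟩, rfl⟩
      · exact ⟨[.f], by simp, s', s', ⟨by omega, rfl⟩, rfl⟩
    · have hw : St .w (emb start) (emb fs) := by
        change RW _ _ (Wn main n) _
        unfold Wn
        rw [RW_MS hemb _ _ hWm]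
        exact ⟨_, _, gs, gf, rfl, rfl, hWrun⟩
      by_cases h : s'.val < 2 * d - 2
      · exact ⟨[.P], by simp, s', s', (if_pos h).symm, rfl⟩
      · by_cases h' : s'.val = 2 * d - 1
        · exact ⟨[.w, .Q], by simp, emb start, emb fs, hw, s', ⟨rfl, h'⟩, rfl⟩
        · exact ⟨[.w, .Q2], by simp, emb start, emb fs, hw, s', ⟨rfl, by omega⟩, rfl⟩

end NC


/-! ### Computability of the reduction -/

namespace NC

open Primrec in
theorem primrec_gInp {m : ℕ → ℕ} {deps : ℕ → List Dep} (ext : List Dem) (hm : Primrec m)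
    (hd : Primrec deps) : Primrec fun p : ℕ × ℕ => gInp (m p.1) (deps p.1) ext p.2 := by
  have t : Primrec fun p : ℕ × ℕ => p.2 := snd
  have m3 : Primrec fun p : ℕ × ℕ => 3 * m p.1 := nat_mul.comp (const 3) (hm.comp fst)
  have dp : Primrec fun p : ℕ × ℕ => deps p.1 := hd.comp fst
  have dl : Primrec fun p : ℕ × ℕ => (deps p.1).length := list_length.comp dp
  have a1 := nat_add.comp m3 dl
  have a2 := nat_add.comp a1 dl
  have a3 := nat_add.comp a2 dl
  have tm := nat_mod.comp t (const 3)
  have g1 := (list_getD ((0, [], []) : Dep)).comp dp (nat_sub.comp t m3)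
  have g2 := (list_getD ((0, [], []) : Dep)).comp dp (nat_sub.comp t a1)
  have g3 := (list_getD (([], []), []) : Primrec₂ fun (l : List Dem) n => _).comp (const ext)
    (nat_sub.comp t a3)
  have sg : Primrec fun n : ℕ => [n] := list_cons.comp Primrec.id (const [])
  unfold gInp
  refine Primrec.ite (nat_lt.comp t m3) (Primrec.ite (Primrec.eq.comp tm (const 0)) (const _)
    (Primrec.ite (Primrec.eq.comp tm (const 1)) (const _) (const _))) ?_
  refine Primrec.ite (nat_lt.comp t a1) (Primrec.pair (const _) (sg.comp
    (nat_add.comp (nat_mul.comp (const 3) (fst.comp g1)) (const 2)))) ?_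
  refine Primrec.ite (nat_lt.comp t a2) (Primrec.pair (fst.comp (snd.comp g2))
    (list_cons.comp (nat_sub.comp t dl) (snd.comp (snd.comp g2)))) ?_
  refine Primrec.ite (nat_lt.comp t a3) (Primrec.pair (const _)
    (sg.comp (nat_sub.comp (nat_sub.comp t dl) dl))) ?_
  exact fst.comp g3

open Primrec in
theorem primrec_gDm {m : ℕ → ℕ} {deps : ℕ → List Dep} (ext : List Dem) (hm : Primrec m)
    (hd : Primrec deps) : Primrec fun p : ℕ × ℕ => gDm (m p.1) (deps p.1) ext p.2 := by
  have t : Primrec fun p : ℕ × ℕ => p.2 := snd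
  have m3 : Primrec fun p : ℕ × ℕ => 3 * m p.1 := nat_mul.comp (const 3) (hm.comp fst)
  have dp : Primrec fun p : ℕ × ℕ => deps p.1 := hd.comp fst
  have dl : Primrec fun p : ℕ × ℕ => (deps p.1).length := list_length.comp dp
  have a1 := nat_add.comp m3 dl
  have a2 := nat_add.comp a1 dl
  have a3 := nat_add.comp a2 dl
  have g3 := (list_getD (([], []), []) : Primrec₂ fun (l : List Dem) n => _).comp (const ext)
    (nat_sub.comp t a3)
  unfold gDm
  refine Primrec.ite (nat_lt.comp t a1) (const _) ?_
  refine Primrec.ite (nat_lt.comp t a2) (const _) ?_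
  refine Primrec.ite (nat_lt.comp t a3) (const _) ?_
  exact snd.comp g3

open Primrec in
theorem primrec_gNet {m : ℕ → ℕ} {deps : ℕ → List Dep} (ext : List Dem) (hm : Primrec m)
    (hd : Primrec deps) : Primrec fun n : ℕ => gNet (m n) (deps n) ext := by
  have m3 : Primrec fun n : ℕ => 3 * m n := nat_mul.comp (const 3) hm
  have dl : Primrec fun n : ℕ => (deps n).length := list_length.comp hd
  have hM : Primrec fun n : ℕ => gM (m n) (deps n) := nat_add.comp m3 dl
  have hN : Primrec fun n : ℕ => gN (m n) (deps n) ext :=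
    nat_add.comp (nat_add.comp (nat_add.comp hM dl) dl) (const ext.length)
  have hI := primrec_gInp ext hm hd
  have hD := primrec_gDm ext hm hd
  have h2N := nat_mul.comp (const 2) hN
  unfold gNet netOf
  refine Primrec.pair h2N (Primrec.pair (const 4) (Primrec.pair ?_ (Primrec.pair ?_ ?_)))
  · refine list_append.comp (list_map (list_range.comp hM) ?_) (list_flatMap (list_range.comp hN) ?_)
    · have : Primrec fun p : ℕ × ℕ => 2 * p.2 := nat_mul.comp (const 2) snd
      exact Primrec.pair this (nat_add.comp this (const 1))
    · refine list_map (f := fun p : ℕ × ℕ => (gInp (m p.1) (deps p.1) ext p.2).2)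
        (snd.comp hI) ?_
      exact Primrec.pair (nat_add.comp (nat_mul.comp (const 2) snd) (const 1))
        (nat_mul.comp (const 2) (snd.comp fst))
  · refine list_map (list_range.comp h2N) ?_
    refine Primrec.ite (Primrec.eq.comp (nat_mod.comp snd (const 2)) (const 0)) ?_ (const [])
    exact fst.comp (hI.comp (Primrec.pair fst (nat_div.comp snd (const 2))))
  · refine list_map (list_range.comp h2N) ?_
    refine Primrec.ite (Primrec.eq.comp (nat_mod.comp snd (const 2)) (const 0)) ?_ (const [])
    exact hD.comp (Primrec.pair fst (nat_div.comp snd (const 2)))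

/-! ### Compilation of words to operators -/

section compile

variable (main : Prog) (m : ℕ)

def baseW : List Word :=
  (rels main m).map Prod.fst ++ (rels main m).map Prod.snd ++ zerosW ++ coversW.flatten ++
    [[.s], [.a 0], [.w], [.h, .pr main, .fin]]

def Ws : List Word :=
  [] :: (baseW main m).flatMap fun u => u.tails ++ u.map fun x => [x]

def ix (u : Word) : ℕ := (Ws main m).idxOf u

theorem Ws_base {u : Word} (h : u ∈ baseW main m) : u ∈ Ws main m := by
  simp only [Ws, List.mem_cons, List.mem_flatMap, List.mem_append]
  exact Or.inr ⟨u, h, Or.inl ((List.mem_tails _ _).2 (List.suffix_refl u))⟩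

theorem Ws_closed {x : Letter} {u : Word} (h : x :: u ∈ Ws main m) :
    [x] ∈ Ws main m ∧ u ∈ Ws main m := by
  simp only [Ws, List.mem_cons, List.mem_flatMap, List.mem_append, List.mem_tails,
    List.mem_map] at h ⊢
  rcases h with h | ⟨v, hv, h | ⟨y, hy, h⟩⟩
  · simp at h
  · exact ⟨Or.inr ⟨v, hv, Or.inr ⟨x, h.subset (by simp), rfl⟩⟩,
      Or.inr ⟨v, hv, Or.inl ((List.suffix_cons x u).trans h)⟩⟩
  · simp only [List.cons.injEq] at h
    obtain ⟨rfl, rfl⟩ := h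
    exact ⟨Or.inr ⟨v, hv, Or.inr ⟨y, hy, rfl⟩⟩, Or.inl rfl⟩

theorem ix_lt {u : Word} (h : u ∈ Ws main m) : ix main m u < (Ws main m).length :=
  List.idxOf_lt_length_of_mem h

theorem ix_getD {u : Word} (h : u ∈ Ws main m) : (Ws main m).getD (ix main m u) [] = u := by
  rw [List.getD_eq_getElem _ _ (ix_lt main m h)]
  exact List.getElem_idxOf _

theorem ix_nil : ix main m [] = 0 := by
  simp [ix, Ws]

theorem nil_mem : [] ∈ Ws main m := by simp [Ws]

def tl1 : Word → List (ℕ × ℕ × ℕ)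
  | [] => []
  | x :: u => [(ix main m [x], ix main m u, ix main m (x :: u))]

def C0 : List (ℕ × ℕ × ℕ) :=
  (Ws main m).flatMap (tl1 main m) ++
    (rels main m).map (fun r => (0, ix main m r.1, ix main m r.2)) ++
    [(0, ix main m [.s], (Ws main m).length)]

def compsN (n : ℕ) : List (ℕ × ℕ × ℕ) :=
  C0 main m ++
    (List.range n).map (fun k => ((Ws main m).length + k, ix main m [.a 0],
      (Ws main m).length + k + 1)) ++
    [((Ws main m).length + n, ix main m [.h, .pr main, .fin], ix main m [.w])] ++
    (List.range ((Ws main m).length + n + 1)).flatMap (fun f => [(f, 0, f), (0, f, f)])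

def zerosN : List ℕ := zerosW.map (ix main m)
def coversN : List (List ℕ) := coversW.map (List.map (ix main m))

theorem rels_mem {r : Word × Word} (h : r ∈ rels main m) : r.1 ∈ Ws main m ∧ r.2 ∈ Ws main m := by
  constructor <;> apply Ws_base <;> simp only [baseW, List.mem_append, List.mem_map]
  · exact Or.inl (Or.inl (Or.inl (Or.inl ⟨r, h, rfl⟩)))
  · exact Or.inl (Or.inl (Or.inl (Or.inr ⟨r, h, rfl⟩)))

theorem zerosW_mem {u : Word} (h : u ∈ zerosW) : u ∈ Ws main m := by
  apply Ws_base; simp only [baseW, List.mem_append]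
  exact Or.inl (Or.inl (Or.inr h))

theorem coversW_mem {F : List Word} (hF : F ∈ coversW) {u : Word} (h : u ∈ F) :
    u ∈ Ws main m := by
  apply Ws_base; simp only [baseW, List.mem_append]
  exact Or.inl (Or.inr (List.mem_flatten.2 ⟨F, hF, h⟩))

theorem extra_mem {u : Word}
    (h : u ∈ ([[.s], [.a 0], [.w], [.h, .pr main, .fin]] : List Word)) :
    u ∈ Ws main m := by
  apply Ws_base; simp only [baseW, List.mem_append]
  exact Or.inr h

theorem mem_compsN {n f g k : ℕ} : (f, g, k) ∈ compsN main m n ↔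
    (∃ x u, x :: u ∈ Ws main m ∧ f = ix main m [x] ∧ g = ix main m u ∧ k = ix main m (x :: u)) ∨
    (∃ r ∈ rels main m, f = 0 ∧ g = ix main m r.1 ∧ k = ix main m r.2) ∨
    (f = 0 ∧ g = ix main m [.s] ∧ k = (Ws main m).length) ∨
    (∃ j < n, f = (Ws main m).length + j ∧ g = ix main m [.a 0] ∧
      k = (Ws main m).length + j + 1) ∨
    (f = (Ws main m).length + n ∧ g = ix main m [.h, .pr main, .fin] ∧ k = ix main m [.w]) ∨
    (f < (Ws main m).length + n + 1 ∧ g = 0 ∧ k = f) ∨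
    (f = 0 ∧ g < (Ws main m).length + n + 1 ∧ k = g) := by
  have h1 : (f, g, k) ∈ (Ws main m).flatMap (tl1 main m) ↔
      (∃ x u, x :: u ∈ Ws main m ∧ f = ix main m [x] ∧ g = ix main m u ∧
        k = ix main m (x :: u)) := by
    simp only [List.mem_flatMap]
    constructor
    · rintro ⟨v, hv, h⟩
      cases v with
      | nil => simp [tl1] at h
      | cons x u => exact ⟨x, u, hv, by simpa [tl1] using h⟩
    · rintro ⟨x, u, hv, h⟩
      exact ⟨_, hv, by simpa [tl1] using h⟩
  have h2 : (f, g, k) ∈ (List.range ((Ws main m).length + n + 1)).flatMap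
      (fun f => [(f, 0, f), (0, f, f)]) ↔
      (f < (Ws main m).length + n + 1 ∧ g = 0 ∧ k = f) ∨
      (f = 0 ∧ g < (Ws main m).length + n + 1 ∧ k = g) := by
    simp only [List.mem_flatMap, List.mem_range, List.mem_cons, List.not_mem_nil, or_false,
      Prod.mk.injEq]
    constructor
    · rintro ⟨a, ha, ⟨rfl, rfl, rfl⟩ | ⟨rfl, rfl, rfl⟩⟩
      · exact Or.inl ⟨ha, rfl, rfl⟩
      · exact Or.inr ⟨rfl, ha, rfl⟩
    · rintro (⟨ha, rfl, rfl⟩ | ⟨rfl, ha, rfl⟩)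
      · exact ⟨_, ha, Or.inl ⟨rfl, rfl, rfl⟩⟩
      · exact ⟨_, ha, Or.inr ⟨rfl, rfl, rfl⟩⟩
  have h3 : (f, g, k) ∈ (rels main m).map (fun r => (0, ix main m r.1, ix main m r.2)) ↔
      ∃ r ∈ rels main m, f = 0 ∧ g = ix main m r.1 ∧ k = ix main m r.2 := by
    simp only [List.mem_map, Prod.mk.injEq, @eq_comm _ f, @eq_comm _ g, @eq_comm _ k]
  have h4 : (f, g, k) ∈ (List.range n).map (fun k => ((Ws main m).length + k, ix main m [.a 0],
      (Ws main m).length + k + 1)) ↔ ∃ j < n, f = (Ws main m).length + j ∧ g = ix main m [.a 0] ∧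
      k = (Ws main m).length + j + 1 := by
    simp only [List.mem_map, List.mem_range, Prod.mk.injEq, @eq_comm _ f, @eq_comm _ g,
      @eq_comm _ k]
  simp only [compsN, C0, List.mem_append, h1, h2, h3, h4, List.mem_singleton, Prod.mk.injEq,
    or_assoc]

def mN (n : ℕ) : ℕ := (Ws main m).length + n + 1

theorem cwf (n : ℕ) : CWF (mN main m n) (compsN main m n) (zerosN main m) (coversN main m) := by
  have hl : ∀ u, u ∈ Ws main m → ix main m u < mN main m n := by
    intro u hu
    have := ix_lt main m hu
    unfold mN
    omega
  refine ⟨by unfold mN; omega, ?_, ?_, ?_⟩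
  · rintro ⟨f, g, k⟩ h
    rw [mem_compsN] at h
    have e1 := hl _ (extra_mem main m (u := [.s]) (by simp))
    have e2 := hl _ (extra_mem main m (u := [.a 0]) (by simp))
    have e3 := hl _ (extra_mem main m (u := [.w]) (by simp))
    have e4 := hl _ (extra_mem main m (u := [.h, .pr main, .fin]) (by simp))
    simp only
    have hmn : mN main m n = (Ws main m).length + n + 1 := rfl
    rcases h with ⟨x, u, hu, rfl, rfl, rfl⟩ | ⟨r, hr, rfl, rfl, rfl⟩ | ⟨rfl, rfl, rfl⟩ |
      ⟨j, hj, rfl, rfl, rfl⟩ | ⟨rfl, rfl, rfl⟩ | ⟨hf, rfl, rfl⟩ | ⟨rfl, hf, rfl⟩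
    · exact ⟨hl _ (Ws_closed main m hu).1, hl _ (Ws_closed main m hu).2, hl _ hu⟩
    · exact ⟨by omega, hl _ (rels_mem main m hr).1, hl _ (rels_mem main m hr).2⟩
    · exact ⟨by omega, e1, by omega⟩
    · exact ⟨by omega, e2, by omega⟩
    · exact ⟨by omega, e4, e3⟩
    · exact ⟨by omega, by omega, by omega⟩
    · exact ⟨by omega, by omega, by omega⟩
  · intro h hh
    obtain ⟨u, hu, rfl⟩ := List.mem_map.1 hh
    exact hl _ (zerosW_mem main m hu)
  · intro F hF f hf
    obtain ⟨F, hF2, rfl⟩ := List.mem_map.1 hF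
    obtain ⟨u, hu, rfl⟩ := List.mem_map.1 hf
    exact hl _ (coversW_mem main m hF2 hu)

/-- The network attached to an input. -/
def netN (n : ℕ) : Network :=
  gNet (mN main m n) (mkDeps (compsN main m n) (zerosN main m)) (mkExt (coversN main m))

theorem netN_valid (n : ℕ) : NetworkValid (netN main m n) := netOf_valid (cwf main m n).gwf.wf

open Primrec in
theorem netN_primrec : Primrec (netN main m) := by
  apply primrec_gNet
  · exact nat_add.comp (nat_add.comp (const _) Primrec.id) (const 1)
  · unfold mkDeps
    refine list_append.comp (list_map ?_ ?_) (const _)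
    · unfold compsN
      have i1 : Primrec fun n : ℕ => (Ws main m).length + n := nat_add.comp (const _) Primrec.id
      have sg : Primrec fun n : ℕ × ℕ × ℕ => [n] := list_cons.comp Primrec.id (const [])
      refine list_append.comp (list_append.comp (list_append.comp (const _) ?_) ?_) ?_
      · refine list_map list_range ?_
        have i2 := i1.comp (snd : Primrec fun p : ℕ × ℕ => p.2)
        exact Primrec.pair i2 (Primrec.pair (const _) (nat_add.comp i2 (const 1)))
      · exact sg.comp (Primrec.pair i1 (const _))
      · refine list_flatMap (list_range.comp (nat_add.comp i1 (const 1))) ?_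
        have s2 := (snd : Primrec fun p : ℕ × ℕ => p.2)
        exact list_cons.comp (Primrec.pair s2 (Primrec.pair (const 0) s2))
          (sg.comp (Primrec.pair (const 0) (Primrec.pair s2 s2)))
    · have c1 : Primrec fun p : ℕ × (ℕ × ℕ × ℕ) => p.2.1 := fst.comp snd
      have c2 : Primrec fun p : ℕ × (ℕ × ℕ × ℕ) => p.2.2.1 := fst.comp (snd.comp snd)
      have c3 : Primrec fun p : ℕ × (ℕ × ℕ × ℕ) => p.2.2.2 := snd.comp (snd.comp snd)
      exact Primrec.pair c3 (Primrec.pair (const []) (list_cons.comp (nat_mul.comp (const 3) c1)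
        (list_cons.comp (nat_add.comp (nat_mul.comp (const 3) c2) (const 1)) (const []))))

open Function

theorem not_solvable {n t : ℕ} {σ' : ℕ → ℕ} (hb : main.Bdd m) (hm : 2 ≤ m)
    (hrun : Run main (update (fun _ => 0) 0 n) t σ') (h1 : σ' 1 ≠ 0) :
    ¬ Solvable (netN main m n) := by
  rintro ⟨q, hq, hs⟩
  have hw := cwf main m n
  obtain ⟨X, hX⟩ := sol_of_solvable hw.gwf.wf (by omega) hs
  let o : Fin q := ⟨0, by omega⟩
  obtain ⟨E, hE0, hEid, hEc, hEz, hEv⟩ := sound hw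
    (fun f hf => ⟨(mem_compsN main m).2
        (Or.inr (Or.inr (Or.inr (Or.inr (Or.inr (Or.inl ⟨hf, rfl, rfl⟩)))))),
      (mem_compsN main m).2
        (Or.inr (Or.inr (Or.inr (Or.inr (Or.inr (Or.inr ⟨rfl, hf, rfl⟩))))))⟩)
    (by simp [coversN, coversW, ix_nil]) hX o
  let ρ : Letter → Fin q → Fin q := fun x => if [x] ∈ Ws main m then E (ix main m [x]) else id
  have hl : ∀ u, u ∈ Ws main m → ix main m u < mN main m n := by
    intro u hu
    have := ix_lt main m hu
    unfold mN
    omega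
  have hact : ∀ u, u ∈ Ws main m → ∀ c, E (ix main m u) c = act ρ u c := by
    intro u
    induction u with
    | nil => intro _ c; rw [ix_nil]; exact hEid c
    | cons x u ih =>
      intro hu c
      have hc := Ws_closed main m hu
      rw [hEc _ _ _ ((mem_compsN main m).2 (Or.inl ⟨x, u, hu, rfl, rfl, rfl⟩)), ih hc.2]
      simp [act, ρ, hc.1]
  have hrep : Rep main m n o ρ := by
    constructor
    · intro x
      by_cases hx : [x] ∈ Ws main m
      · simp only [ρ, hx, if_true]
        exact hE0 _ (hl _ hx)
      · simp only [ρ, hx, if_false, id]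
    · intro r hr c
      have := rels_mem main m hr
      rw [← hact _ this.1, ← hact _ this.2,
        hEc _ _ _ ((mem_compsN main m).2 (Or.inr (Or.inl ⟨r, hr, rfl, rfl, rfl⟩))), hEid]
    · intro u hu c
      rw [← hact _ (zerosW_mem main m hu)]
      exact hEz _ (List.mem_map.2 ⟨u, hu, rfl⟩) c
    · intro c
      have hk : ∀ k ≤ n, ∀ c, E ((Ws main m).length + k) c =
          act ρ (.s :: List.replicate k (.a 0)) c := by
        intro k
        induction k with
        | zero =>
          intro _ c
          rw [List.replicate_zero, ← hact _ (extra_mem main m (u := [.s]) (by simp))]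
          rw [add_zero, hEc _ _ _ ((mem_compsN main m).2
            (Or.inr (Or.inr (Or.inl ⟨rfl, rfl, rfl⟩)))), hEid]
        | succ k ih =>
          intro hk c
          rw [← add_assoc, hEc _ _ _ ((mem_compsN main m).2
            (Or.inr (Or.inr (Or.inr (Or.inl ⟨k, by omega, rfl, rfl, rfl⟩))))), ih (by omega),
            hact _ (extra_mem main m (u := [.a 0]) (by simp)), ← act_append,
            List.replicate_succ', List.cons_append]
      have e1 : ρ .w c = act ρ [.w] c := rfl
      have e2 : Wn main n = (.s :: List.replicate n (.a 0)) ++ [.h, .pr main, .fin] := rfl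
      rw [e1, ← hact _ (extra_mem main m (u := [.w]) (by simp)), e2, act_append,
        ← hk n le_rfl, ← hact _ (extra_mem main m (u := [.h, .pr main, .fin]) (by simp))]
      exact hEc _ _ _ ((mem_compsN main m).2
        (Or.inr (Or.inr (Or.inr (Or.inr (Or.inl ⟨rfl, rfl, rfl⟩)))))) c
    · intro F hF c c' h
      refine hEv (F.map (ix main m)) (List.mem_map.2 ⟨F, hF, rfl⟩) c c' ?_
      intro f hf
      obtain ⟨u, hu, rfl⟩ := List.mem_map.1 hf
      rw [hact _ (coversW_mem main m hF hu), hact _ (coversW_mem main m hF hu)]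
      exact h u hu
  have := rep_sound hrep hb hm hrun h1 ⟨1, by omega⟩
  simp [o] at this

/-- Composite of additive operators. -/
def actH {V : Type} [AddCommGroup V] (ρ : Letter → V →+ V) : Word → V →+ V
  | [] => AddMonoidHom.id V
  | x :: u => (ρ x).comp (actH ρ u)

theorem actH_eq {V : Type} [AddCommGroup V] (ρ : Letter → V →+ V) (u : Word) (v : V) :
    actH ρ u v = act (fun x => (ρ x : V → V)) u v := by
  induction u with
  | nil => rfl
  | cons x u ih => simp [actH, act, ih]

theorem solvable_of {n t : ℕ} {σ' : ℕ → ℕ} (hb : main.Bdd m) (hm : 2 ≤ m)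
    (hrun : Run main (update (fun _ => 0) 0 n) t σ') (h1 : σ' 1 = 0) :
    Solvable (netN main m n) := by
  obtain ⟨D, ρ, hD, hr⟩ := exists_model hb hm hrun h1
  have hw := cwf main m n
  let V := Fin D → ZMod 2
  have hq : 2 ≤ Fintype.card V := by
    simp only [V, Fintype.card_fun, ZMod.card, Fintype.card_fin]
    calc 2 = 2 ^ 1 := rfl
      _ ≤ 2 ^ D := Nat.pow_le_pow_right (by omega) hD
  refine ⟨Fintype.card V, hq, ?_⟩
  let ow : ℕ → Word := fun i => if i < (Ws main m).length then (Ws main m).getD i [] else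
    .s :: List.replicate (i - (Ws main m).length) (.a 0)
  let ρ' : Letter → V → V := fun x => ρ x
  let E : ℕ → V →+ V := fun i => actH ρ (ow i)
  have hE : ∀ i v, E i v = act ρ' (ow i) v := fun i v => actH_eq _ _ _
  have how : ∀ u, u ∈ Ws main m → ow (ix main m u) = u := by
    intro u hu
    simp only [ow, ix_lt main m hu, if_true]
    exact ix_getD main m hu
  have how2 : ∀ k, ow ((Ws main m).length + k) = .s :: List.replicate k (.a 0) := by
    intro k
    simp [ow]
  have how0 : ow 0 = [] := by
    rw [← ix_nil main m]; exact how _ (nil_mem main m)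
  have h0 : ∀ v, E 0 v = v := by
    intro v
    rw [hE, how0]; rfl
  obtain ⟨X, hX⟩ := complete (Fintype.equivFin V).symm
    (fun v => by funext i; exact CharTwo.add_self_eq_zero _) E h0 hw
    (by
      intro f g k h v
      rw [mem_compsN] at h
      rcases h with ⟨x, u, hu, rfl, rfl, rfl⟩ | ⟨r, hr', rfl, rfl, rfl⟩ | ⟨rfl, rfl, rfl⟩ |
        ⟨j, hj, rfl, rfl, rfl⟩ | ⟨rfl, rfl, rfl⟩ | ⟨hf, rfl, rfl⟩ | ⟨rfl, hf, rfl⟩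
      · rw [hE, hE, hE, how _ hu, how _ (Ws_closed main m hu).1, how _ (Ws_closed main m hu).2]
        rfl
      · rw [h0, hE, hE, how _ (rels_mem main m hr').1, how _ (rels_mem main m hr').2]
        exact (hr.rel r hr' v).symm
      · rw [h0, hE, hE, how _ (extra_mem main m (by simp))]
        have := how2 0
        rw [add_zero] at this
        rw [this]; rfl
      · rw [add_assoc, hE, hE, hE, how2, how2, how _ (extra_mem main m (by simp)), ← act_append,
          List.replicate_succ', List.cons_append]
      · rw [hE, hE, hE, how2, how _ (extra_mem main m (by simp)),
          how _ (extra_mem main m (by simp)), ← act_append]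
        exact hr.wd v
      · rw [h0]
      · rw [h0])
    (by
      intro k hk v
      obtain ⟨u, hu, rfl⟩ := List.mem_map.1 hk
      rw [hE, how _ (zerosW_mem main m hu)]
      exact hr.zero u hu v)
    (by
      intro F hF v v' h
      obtain ⟨F, hF2, rfl⟩ := List.mem_map.1 hF
      refine hr.cov F hF2 v v' ?_
      intro u hu
      have := h _ (List.mem_map.2 ⟨u, hu, rfl⟩)
      rw [hE, hE, how _ (coversW_mem main m hF2 hu)] at this
      exact this)
  exact solvable_of_sol hw.gwf.wf (by omega) hX

end compile

theorem main_result :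
    ¬ ∃ f : Network → Bool, Computable f ∧
      ∀ net : Network, NetworkValid net → (f net = true ↔ Solvable net) := by
  rintro ⟨f, hf, hdec⟩
  let φ : ℕ →. ℕ := fun n => (Denumerable.ofNat Nat.Partrec.Code n).eval n
  have hφ : Partrec φ :=
    Nat.Partrec.Code.eval_part.comp (Computable.ofNat Nat.Partrec.Code) Computable.id
  obtain ⟨main, hmain⟩ := exists_prog φ hφ
  obtain ⟨m0, hm0⟩ := main.exists_bdd
  have hb : main.Bdd (m0 + 2) := hm0.mono (by omega)
  let g : ℕ → ℕ := fun n => cond (f (netN main (m0 + 2) n)) 1 0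
  have hg : Computable g := Computable.cond (hf.comp (netN_primrec main (m0 + 2)).to_comp)
    (Computable.const 1) (Computable.const 0)
  obtain ⟨c, hc⟩ := Nat.Partrec.Code.exists_code.1 (Partrec.nat_iff.1 hg)
  have hmem : g (Encodable.encode c) ∈ φ (Encodable.encode c) := by
    simp only [φ, Denumerable.ofNat_encode, hc]
    exact Part.mem_some _
  obtain ⟨t, hrun⟩ := hmain _ _ hmem
  have hd := hdec _ (netN_valid main (m0 + 2) (Encodable.encode c))
  by_cases h : f (netN main (m0 + 2) (Encodable.encode c)) = true
  · have h1 : g (Encodable.encode c) = 1 := by simp only [g, h, cond_true]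
    exact not_solvable main (m0 + 2) hb (by omega) hrun (by simp [h1]) (hd.1 h)
  · have h1 : g (Encodable.encode c) = 0 := by
      simp only [Bool.not_eq_true] at h
      simp only [g, h, cond_false]
    exact h (hd.2 (solvable_of main (m0 + 2) hb (by omega) hrun (by simp [h1])))

end NC

/-- Theorem `netcode`: network coding is undecidable: no computable
function decides, given a (valid) network, whether it is solvable. -/
theorem undecidable_network_coding :
    ¬ ∃ f : Network → Bool, Computable f ∧
      ∀ net : Network, NetworkValid net → (f net = true ↔ Solvable net) := by
  exact NC.main_result

end
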